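/- arXiv:math/0305430 — 5 statements merged into one kernel-verified Lean document; each statement's English description precedes it below -/
import Mathlib

section
/- For an odd positive integer r and Y = X_{i+1}···X_{i+r}, the sum of all monomials of the standard polynomial s_m(X_1,...,X_m) that formally contain the consecutive factor X_{i+1}X_{i+2}···X_{i+r} equals s_{m-r+1}(X_1,...,X_i, Y, X_{i+r+1},...,X_m). -/
/-- The standard polynomial `s_d` evaluated at `x : Fin d → R`. -/
noncomputable def stdPoly {R : Type*} [Ring R] (d : ℕ) (x : Fin d → R) : R :=
  ∑ σ : Equiv.Perm (Fin d), ((Equiv.Perm.sign σ : ℤˣ) : ℤ) • (List.ofFn fun i => x (σ i)).prod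

/-- Insert the value `b` at position `a` into a permutation. -/
def alIns {n : ℕ} (a b : Fin (n + 1)) (τ : Equiv.Perm (Fin n)) : Equiv.Perm (Fin (n + 1)) :=
  b.cycleRange⁻¹ * Equiv.Perm.decomposeFin.symm (0, τ) * a.cycleRange

lemma alIns_sign {n : ℕ} (a b : Fin (n + 1)) (τ : Equiv.Perm (Fin n)) :
    Equiv.Perm.sign (alIns a b τ) = (-1) ^ ((a : ℕ) + b) * Equiv.Perm.sign τ := by
  simp only [alIns, Equiv.Perm.sign_mul, Equiv.Perm.sign_inv, Fin.sign_cycleRange,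
    Equiv.Perm.decomposeFin.symm_sign, if_true, pow_add, one_mul]
  rw [mul_right_comm, mul_comm ((-1) ^ (b : ℕ))]

lemma alIns_self {n : ℕ} (a b : Fin (n + 1)) (τ : Equiv.Perm (Fin n)) :
    alIns a b τ a = b := by
  simp [alIns, Equiv.Perm.mul_apply, Equiv.Perm.inv_def]

lemma alIns_succAbove {n : ℕ} (a b : Fin (n + 1)) (τ : Equiv.Perm (Fin n)) (q : Fin n) :
    alIns a b τ (a.succAbove q) = b.succAbove (τ q) := by
  simp [alIns, Equiv.Perm.mul_apply, Equiv.Perm.inv_def]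

lemma alIns_inj {n : ℕ} (a b : Fin (n + 1)) : Function.Injective (alIns a b) := by
  intro τ τ' h
  simpa [alIns] using h

lemma alIns_surj {n : ℕ} (a b : Fin (n + 1)) (σ : Equiv.Perm (Fin (n + 1))) (h : σ a = b) :
    ∃ τ, alIns a b τ = σ := by
  set e := b.cycleRange * σ * a.cycleRange⁻¹ with he
  have h0 : e 0 = 0 := by
    simp [he, Equiv.Perm.mul_apply, Equiv.Perm.inv_def, h]
  have h1 : (Equiv.Perm.decomposeFin e).1 = 0 := by
    have := Equiv.Perm.decomposeFin_symm_apply_zero (Equiv.Perm.decomposeFin e).1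
      (Equiv.Perm.decomposeFin e).2
    rw [Prod.mk.eta, Equiv.symm_apply_apply, h0] at this
    exact this.symm
  refine ⟨(Equiv.Perm.decomposeFin e).2, ?_⟩
  rw [alIns, ← h1, Prod.mk.eta, Equiv.symm_apply_apply, he]
  group

lemma prod_contractNth {R : Type*} [Ring R] : ∀ (n : ℕ) (a : ℕ) (ha : a < n) (Z : Fin (n + 1) → R),
    (List.ofFn Z).prod = (List.ofFn (Fin.contractNth ⟨a, by omega⟩ (· * ·) Z)).prod := by
  intro n
  induction n with
  | zero => intro a ha; omega
  | succ n ih =>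
    intro a ha Z
    cases a with
    | zero =>
      rw [List.ofFn_succ, List.ofFn_succ, List.ofFn_succ]
      simp [Fin.contractNth, mul_assoc]
    | succ a =>
      rw [List.ofFn_succ, List.prod_cons, ih a (by omega), List.ofFn_succ, List.prod_cons]
      congr 1
      congr 2
      funext k
      simp [Fin.contractNth]

/-- The permutation has the block `i, ..., i+s` at positions `p, ..., p+s`. -/
def AlC (N i s p : ℕ) (σ : Equiv.Perm (Fin N)) : Prop :=
  ∀ j : ℕ, (hj : j < s + 1) → ∃ hpj : p + j < N, ((σ ⟨p + j, hpj⟩ : Fin N) : ℕ) = i + j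

lemma AlC_unique {N i s p p' : ℕ} {σ : Equiv.Perm (Fin N)} (h : AlC N i s p σ)
    (h' : AlC N i s p' σ) : p = p' := by
  obtain ⟨h1, h2⟩ := h 0 (by omega)
  obtain ⟨h1', h2'⟩ := h' 0 (by omega)
  have := σ.injective (Fin.ext (h2.trans h2'.symm))
  simpa using this

lemma alSucc_of_lt {n : ℕ} {a : Fin (n + 1)} {q : Fin n} (h : (q : ℕ) < a) :
    ((a.succAbove q : Fin (n + 1)) : ℕ) = q := by
  rw [Fin.succAbove_of_castSucc_lt _ _ (by simpa [Fin.lt_def] using h)]; simp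

lemma alSucc_of_le {n : ℕ} {a : Fin (n + 1)} {q : Fin n} (h : (a : ℕ) ≤ q) :
    ((a.succAbove q : Fin (n + 1)) : ℕ) = q + 1 := by
  rw [Fin.succAbove_of_le_castSucc _ _ (by simpa [Fin.le_def] using h)]; simp

lemma alIns_val {n : ℕ} (a b : Fin (n + 1)) (τ : Equiv.Perm (Fin n)) (x : Fin (n + 1)) (q : Fin n)
    (h : (x : ℕ) = if (q : ℕ) < a then (q : ℕ) else q + 1) :
    ((alIns a b τ x : Fin (n + 1)) : ℕ) = if (τ q : ℕ) < b then (τ q : ℕ) else τ q + 1 := by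
  have hx : x = a.succAbove q := by
    apply Fin.ext
    split_ifs at h with h1
    · rw [h, alSucc_of_lt h1]
    · rw [h, alSucc_of_le (by omega)]
  rw [hx, alIns_succAbove]
  split_ifs with h1
  · rw [alSucc_of_lt h1]
  · rw [alSucc_of_le (by omega)]

lemma AlC_ins {N i s p : ℕ} (hi : i < N) (hp : p < N) (τ : Equiv.Perm (Fin N)) :
    AlC (N + 1) i (s + 1) p (alIns ⟨p + 1, by omega⟩ ⟨i + 1, by omega⟩ τ) ↔ AlC N i s p τ := by
  constructor
  · intro h j hj
    rcases Nat.eq_zero_or_pos j with rfl | hj0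
    · obtain ⟨h1, h2⟩ := h 0 (by omega)
      refine ⟨by omega, ?_⟩
      rw [alIns_val _ _ τ _ ⟨p + 0, by omega⟩ (by simp)] at h2
      dsimp only at h2
      split_ifs at h2 <;> omega
    · obtain ⟨h1, h2⟩ := h (j + 1) (by omega)
      refine ⟨by omega, ?_⟩
      rw [alIns_val _ _ τ _ ⟨p + j, by omega⟩
        (by dsimp only; rw [if_neg (by omega)]; omega)] at h2
      dsimp only at h2
      split_ifs at h2 <;> omega
  · intro h j hj
    obtain ⟨g1, g2⟩ := h 0 (by omega)
    rcases Nat.eq_zero_or_pos j with rfl | hj0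
    · refine ⟨by omega, ?_⟩
      rw [alIns_val _ _ τ _ ⟨p + 0, by omega⟩ (by simp), g2]
      simp
    · obtain ⟨j, rfl⟩ : ∃ k, j = k + 1 := ⟨j - 1, by omega⟩
      obtain ⟨h1, h2⟩ := h j (by omega)
      refine ⟨by omega, ?_⟩
      rcases Nat.eq_zero_or_pos j with rfl | hj1
      · have := alIns_self ⟨p + 1, by omega⟩ ⟨i + 1, by omega⟩ τ
        exact congrArg Fin.val this
      · rw [alIns_val _ _ τ _ ⟨p + j, by omega⟩
          (by dsimp only; rw [if_neg (by omega)]; omega), h2]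
        dsimp only
        rw [if_neg (by omega)]; omega

lemma al_contract {R : Type*} [Ring R] {N i p : ℕ} (hi : i < N) (hp : p < N)
    (τ : Equiv.Perm (Fin N)) (hτ : (τ ⟨p, hp⟩ : ℕ) = i) (X : Fin (N + 1) → R) :
    Fin.contractNth ⟨p, by omega⟩ (· * ·)
      (fun q => X (alIns ⟨p + 1, by omega⟩ ⟨i + 1, by omega⟩ τ q)) =
    fun q => Fin.contractNth ⟨i, by omega⟩ (· * ·) X (τ q) := by
  funext q
  have hne : (q : ℕ) ≠ p → (τ q : ℕ) ≠ i := by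
    intro hq h
    have := τ.injective (Fin.ext (h.trans hτ.symm))
    exact hq (congrArg Fin.val this)
  rcases lt_trichotomy (q : ℕ) p with h | h | h
  · have hn := hne (by omega)
    have hv := alIns_val ⟨p + 1, by omega⟩ ⟨i + 1, by omega⟩ τ q.castSucc q
      (by dsimp only [Fin.val_castSucc]; rw [if_pos (by omega)])
    rw [Fin.contractNth_apply_of_lt _ _ _ _ h]
    rcases lt_or_gt_of_ne hn with h1 | h1
    · rw [Fin.contractNth_apply_of_lt _ _ _ _ h1]
      congr 1; apply Fin.ext; rw [hv]; dsimp only [Fin.val_castSucc]; rw [if_pos (by omega)]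
    · rw [Fin.contractNth_apply_of_gt _ _ _ _ h1]
      congr 1; apply Fin.ext; rw [hv]; dsimp only [Fin.val_succ]; rw [if_neg (by omega)]
  · obtain rfl : q = ⟨p, hp⟩ := Fin.ext h
    have hv := alIns_val ⟨p + 1, by omega⟩ ⟨i + 1, by omega⟩ τ (Fin.castSucc ⟨p, hp⟩) ⟨p, hp⟩
      (by dsimp only [Fin.val_castSucc]; rw [if_pos (by omega)])
    rw [Fin.contractNth_apply_of_eq _ _ _ _ h, Fin.contractNth_apply_of_eq _ _ _ _ hτ]
    congr 2
    · apply Fin.ext; rw [hv]; dsimp only [Fin.val_castSucc]; rw [if_pos (by omega)]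
    · apply Fin.ext
      refine (congrArg Fin.val (alIns_self ⟨p + 1, by omega⟩ ⟨i + 1, by omega⟩ τ)).trans ?_
      simp [hτ]
  · have hn := hne (by omega)
    have hv := alIns_val ⟨p + 1, by omega⟩ ⟨i + 1, by omega⟩ τ q.succ q
      (by dsimp only [Fin.val_succ]; rw [if_neg (by omega)])
    rw [Fin.contractNth_apply_of_gt _ _ _ _ h]
    rcases lt_or_gt_of_ne hn with h1 | h1
    · rw [Fin.contractNth_apply_of_lt _ _ _ _ h1]
      congr 1; apply Fin.ext; rw [hv]; dsimp only [Fin.val_castSucc]; rw [if_pos (by omega)]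
    · rw [Fin.contractNth_apply_of_gt _ _ _ _ h1]
      congr 1; apply Fin.ext; rw [hv]; dsimp only [Fin.val_succ]; rw [if_neg (by omega)]

open Classical in
/-- Sum of monomials with the block at position `p`. -/
noncomputable def alW {R : Type*} [Ring R] (N i s p : ℕ) (X : Fin N → R) : R :=
  ∑ σ ∈ Finset.univ.filter (fun σ : Equiv.Perm (Fin N) => AlC N i s p σ),
    ((Equiv.Perm.sign σ : ℤˣ) : ℤ) • (List.ofFn fun q => X (σ q)).prod

lemma alW_step {R : Type*} [Ring R] (N i s p : ℕ) (hi : i < N) (hp : p < N)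
    (X : Fin (N + 1) → R) :
    alW (N + 1) i (s + 1) p X =
      ((-1 : ℤ) ^ (p + i)) • alW N i s p (Fin.contractNth ⟨i, by omega⟩ (· * ·) X) := by
  classical
  unfold alW
  rw [Finset.smul_sum]
  symm
  refine Finset.sum_bij (fun τ _ => alIns ⟨p + 1, by omega⟩ ⟨i + 1, by omega⟩ τ) ?_ ?_ ?_ ?_
  · intro τ hτ
    simp only [Finset.mem_filter, Finset.mem_univ, true_and] at hτ ⊢
    exact (AlC_ins hi hp τ).2 hτ
  · intro τ _ τ' _ h
    exact alIns_inj _ _ h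
  · intro σ hσ
    simp only [Finset.mem_filter, Finset.mem_univ, true_and] at hσ
    obtain ⟨h1, h2⟩ := hσ 1 (by omega)
    obtain ⟨τ, hτ⟩ := alIns_surj ⟨p + 1, by omega⟩ ⟨i + 1, by omega⟩ σ (Fin.ext h2)
    refine ⟨τ, ?_, hτ⟩
    rw [← hτ] at hσ
    simp only [Finset.mem_filter, Finset.mem_univ, true_and]
    exact (AlC_ins hi hp τ).1 hσ
  · intro τ hτ
    simp only [Finset.mem_filter, Finset.mem_univ, true_and] at hτ
    obtain ⟨h1, h2⟩ := hτ 0 (by omega)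
    rw [prod_contractNth N p hp, al_contract hi hp τ h2, alIns_sign, smul_smul]
    congr 1
    have : (p + 1 + (i + 1)) = (p + i) + 2 := by omega
    simp [this, pow_add]

/-- The merged variables. -/
def alM {R : Type*} [Ring R] (n i s : ℕ) (hi : i < n) (X : Fin (n + s) → R) (k : Fin n) : R :=
  if (k : ℕ) < i then X ⟨k, by omega⟩
  else if (k : ℕ) = i then
    (List.ofFn fun j : Fin (s + 1) => X ⟨i + (j : ℕ), by have := j.isLt; omega⟩).prod
  else X ⟨(k : ℕ) + s, by omega⟩

lemma alM_step {R : Type*} [Ring R] (n i s : ℕ) (hi : i < n) (X : Fin (n + s + 1) → R) :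
    alM n i s hi (Fin.contractNth ⟨i, by omega⟩ (· * ·) X) = alM n i (s + 1) hi X := by
  funext k
  unfold alM
  split_ifs with h1 h2
  · rw [Fin.contractNth_apply_of_lt _ _ _ _ h1]; rfl
  · rw [List.ofFn_succ, List.ofFn_succ, List.ofFn_succ]
    simp only [List.prod_cons]
    rw [Fin.contractNth_apply_of_eq _ _ _ _ (by simp), mul_assoc]
    congr 2
    congr 2
    funext j
    rw [Fin.contractNth_apply_of_gt _ _ _ _ (by simp)]
    congr 1
  · rw [Fin.contractNth_apply_of_gt _ _ _ _ (by dsimp only; omega)]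
    congr 1

lemma alW_eq {R : Type*} [Ring R] (n i p : ℕ) (hi : i < n) (hp : p < n) :
    ∀ (s : ℕ) (X : Fin (n + s) → R),
    alW (n + s) i s p X = (((-1 : ℤ) ^ (p + i)) ^ s) • alW n i 0 p (alM n i s hi X) := by
  intro s
  induction s with
  | zero =>
    intro X
    have : alM n i 0 hi X = X := by
      funext k
      unfold alM
      split_ifs with h1 h2
      · rfl
      · simp [← h2]
      · rfl
    rw [this]; simp
  | succ s ih =>
    intro X
    refine (alW_step (n + s) i s p (by omega) (by omega) X).trans ?_
    rw [ih, alM_step, smul_smul, pow_succ' _ s]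

open Classical in
lemma al_split {R : Type*} [Ring R] (n i s : ℕ) (X : Fin (n + s) → R) :
    (∑ σ ∈ Finset.univ.filter (fun σ : Equiv.Perm (Fin (n + s)) => ∃ p, AlC (n + s) i s p σ),
      ((Equiv.Perm.sign σ : ℤˣ) : ℤ) • (List.ofFn fun q => X (σ q)).prod) =
    ∑ p ∈ Finset.range n, alW (n + s) i s p X := by
  unfold alW
  rw [← Finset.sum_biUnion]
  · refine Finset.sum_congr ?_ (fun _ _ => rfl)
    ext σ
    simp only [Finset.mem_filter, Finset.mem_univ, true_and, Finset.mem_biUnion, Finset.mem_range]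
    constructor
    · rintro ⟨p, hp⟩
      obtain ⟨h, _⟩ := hp s (by omega)
      exact ⟨p, by omega, hp⟩
    · rintro ⟨p, _, hp⟩
      exact ⟨p, hp⟩
  · intro p _ p' _ hne
    rw [Function.onFun, Finset.disjoint_left]
    intro σ h h'
    simp only [Finset.mem_filter, Finset.mem_univ, true_and] at h h'
    exact hne (AlC_unique h h')

lemma al_std {R : Type*} [Ring R] (n i : ℕ) (hi : i < n) (X : Fin n → R) :
    stdPoly n X = ∑ p ∈ Finset.range n, alW n i 0 p X := by
  classical
  refine Eq.trans ?_ (al_split n i 0 X)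
  unfold stdPoly
  refine Finset.sum_congr ?_ (fun _ _ => rfl)
  ext σ
  simp only [Finset.mem_filter, Finset.mem_univ, true_and, true_iff]
  refine ⟨(σ.symm ⟨i, hi⟩ : Fin n), fun j hj => ?_⟩
  obtain rfl : j = 0 := by omega
  exact ⟨by simp, by simp⟩

open Classical in
/-- Amitsur–Levitski, Lemma 1: for odd `r` and `Y = X_{i+1} ⋯ X_{i+r}`, the sum of all
monomials of `s_m(X₁,…,X_m)` formally containing the consecutive factor
`X_{i+1} X_{i+2} ⋯ X_{i+r}` equals `s_{m-r+1}(X₁,…,X_i, Y, X_{i+r+1},…,X_m)`. -/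
theorem amitsur_levitski_lemma1 (R : Type*) [Ring R] (m i r : ℕ) (hr : Odd r)
    (hir : i + r ≤ m) (X : Fin m → R) :
    (∑ σ ∈ Finset.univ.filter (fun σ : Equiv.Perm (Fin m) =>
        ∃ p : ℕ, ∀ j : ℕ, (hj : j < r) →
          ∃ hpj : p + j < m, ((σ ⟨p + j, hpj⟩ : Fin m) : ℕ) = i + j),
      ((Equiv.Perm.sign σ : ℤˣ) : ℤ) • (List.ofFn fun q => X (σ q)).prod) =
    stdPoly (m - r + 1) (fun k =>
      if h : (k : ℕ) < i then X ⟨k, by omega⟩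
      else if h2 : (k : ℕ) = i then
        (List.ofFn fun j : Fin r => X ⟨i + (j : ℕ), by have := j.isLt; omega⟩).prod
      else X ⟨(k : ℕ) + r - 1, by
        have := k.isLt; rcases hr with ⟨c, hc⟩; omega⟩) := by
  obtain ⟨c, rfl⟩ := hr
  obtain ⟨n, rfl⟩ : ∃ n, m = n + 2 * c := ⟨m - 2 * c, by omega⟩
  have hi : i < n := by omega
  have hn : n + 2 * c - (2 * c + 1) + 1 = n := by omega
  refine (al_split n i (2 * c) X).trans ?_
  have key : ∀ (n' : ℕ) (h : n' = n) (x : Fin n' → R) (y : Fin n → R),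
      (∀ k : Fin n', x k = y ⟨k, by omega⟩) → stdPoly n' x = stdPoly n y := by
    intro n' h x y hxy
    subst h
    congr 1
    funext k
    exact hxy k
  rw [key _ hn _ (alM n i (2 * c) hi X), al_std n i hi]
  · refine Finset.sum_congr rfl fun p hp => ?_
    rw [alW_eq n i p hi (Finset.mem_range.1 hp)]
    rw [← pow_mul, mul_left_comm, pow_mul]
    simp
  · intro k
    unfold alM
    split_ifs with h1 h2
    · rfl
    · rfl
    · rfl
end

section
/- Let A be the algebra of all (2ℓ+m)×(2ℓ+m) matrices of block form [[a,b,c],[0,e,d],[0,0,a]] with a, c ∈ M_ℓ(F), e ∈ M_m(F), b ∈ M_{ℓ×m}(F), d ∈ M_{m×ℓ}(F) (the same a in both corner positions). Then A satisfies the standard identity s_{2(ℓ+m)}. -/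
open Matrix

/-- Membership in the algebra of block matrices `[[a,b,c],[0,e,d],[0,0,a]]`
(same `a` in both corner diagonal positions). -/
def memA {F : Type*} [Field F] {ℓ m : ℕ}
    (M : Matrix (Fin ℓ ⊕ (Fin m ⊕ Fin ℓ)) (Fin ℓ ⊕ (Fin m ⊕ Fin ℓ)) F) : Prop :=
  (∀ (i : Fin m) (j : Fin ℓ), M (Sum.inr (Sum.inl i)) (Sum.inl j) = 0) ∧
  (∀ (i : Fin ℓ) (j : Fin ℓ), M (Sum.inr (Sum.inr i)) (Sum.inl j) = 0) ∧
  (∀ (i : Fin ℓ) (j : Fin m), M (Sum.inr (Sum.inr i)) (Sum.inr (Sum.inl j)) = 0) ∧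
  (∀ (i j : Fin ℓ), M (Sum.inr (Sum.inr i)) (Sum.inr (Sum.inr j)) = M (Sum.inl i) (Sum.inl j))

namespace AL
set_option linter.unusedSectionVars false

def T {J ι K : Type*} [Fintype J] [DecidableEq J] [Fintype ι] [CommRing K]
    (π : Equiv.Perm J) (W : J → Matrix ι ι K) : K :=
  ∑ h : J → ι, ∏ j, W j (h j) (h (π j))

section
variable {J ι K : Type*} [Fintype J] [DecidableEq J] [Fintype ι] [CommRing K]

lemma T_conj (ρ π : Equiv.Perm J) (W : J → Matrix ι ι K) :
    T (ρ * π * ρ⁻¹) W = T π (W ∘ ρ) := by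
  unfold T
  refine Fintype.sum_equiv (Equiv.arrowCongr ρ⁻¹ (Equiv.refl ι)) _ _ fun h => ?_
  rw [← Equiv.prod_comp ρ]
  simp [Equiv.arrowCongr, Function.comp_def]
  rfl

lemma sum_T [DecidableEq ι] (hc : Fintype.card ι < Fintype.card J) (W : J → Matrix ι ι K) :
    ∑ σ : Equiv.Perm J, ((Equiv.Perm.sign σ : ℤˣ) : ℤ) • T σ W = 0 := by
  have : ∀ h : J → ι, (Matrix.of fun i j => W j (h j) (h i)).det = 0 := by
    intro h
    obtain ⟨i, j, hij, e⟩ := Fintype.exists_ne_map_eq_of_card_lt h hc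
    exact Matrix.det_zero_of_row_eq hij (by ext k; simp [e])
  simp only [T, Finset.smul_sum]
  rw [Finset.sum_comm]
  refine Finset.sum_eq_zero fun h _ => ?_
  rw [← this h, Matrix.det_apply]
  rfl

/-- inflation of a permutation -/
def infl (σ : Equiv.Perm J) : Equiv.Perm (J ⊕ J) :=
  (Equiv.sumComm J J).trans (Equiv.sumCongr σ (Equiv.refl J))

@[simp] lemma infl_inl (σ : Equiv.Perm J) (i : J) : infl σ (Sum.inl i) = Sum.inr i := rfl
@[simp] lemma infl_inr (σ : Equiv.Perm J) (i : J) : infl σ (Sum.inr i) = Sum.inl (σ i) := rfl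

lemma T_infl [DecidableEq ι] (σ : Equiv.Perm J) (W : J ⊕ J → Matrix ι ι K) :
    T (infl σ) W = T σ (fun i => W (Sum.inl i) * W (Sum.inr i)) := by
  unfold T
  rw [← Equiv.sum_comp (Equiv.sumArrowEquivProdArrow J J ι).symm, Fintype.sum_prod_type]
  refine Finset.sum_congr rfl fun f _ => ?_
  simp only [Matrix.mul_apply, Finset.prod_univ_sum, Fintype.piFinset_univ]
  refine Finset.sum_congr rfl fun g _ => ?_
  rw [Fintype.prod_sum_type, ← Finset.prod_mul_distrib]
  rfl

lemma infl_conj (ρ σ : Equiv.Perm J) :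
    infl (ρ * σ * ρ⁻¹) = Equiv.Perm.sumCongr ρ ρ * infl σ * (Equiv.Perm.sumCongr ρ ρ)⁻¹ := by
  rw [eq_mul_inv_iff_mul_eq]
  ext (i | i) <;> simp

end

lemma path {ι K : Type*} [Fintype ι] [DecidableEq ι] [CommRing K] (n : ℕ)
    (Z : Fin (n+1) → Matrix ι ι K) (a b : ι) :
    (List.ofFn Z).prod a b =
      ∑ g : Fin n → ι, ∏ i : Fin (n+1), Z i (Fin.cons (α := fun _ => ι) a g i)
        (Fin.snoc (α := fun _ => ι) g b i) := by
  induction n generalizing a with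
  | zero => simp [Fin.snoc]
  | succ n ih =>
    rw [List.ofFn_succ, List.prod_cons, Matrix.mul_apply,
      ← Equiv.sum_comp (Fin.consEquiv (fun _ : Fin (n+1) => ι)), Fintype.sum_prod_type]
    refine Finset.sum_congr rfl fun c _ => ?_
    rw [ih, Finset.mul_sum]
    refine Finset.sum_congr rfl fun g _ => ?_
    conv_rhs => rw [Fin.prod_univ_succ]
    simp only [Fin.consEquiv, Equiv.coe_fn_mk, Fin.cons_zero, Fin.cons_succ,
      ← Fin.cons_snoc_eq_snoc_cons]

lemma T_rot {ι K : Type*} [Fintype ι] [DecidableEq ι] [CommRing K] (n : ℕ)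
    (Z : Fin (n+1) → Matrix ι ι K) : T (finRotate (n+1)) Z = (List.ofFn Z).prod.trace := by
  unfold T
  rw [← Equiv.sum_comp (Fin.consEquiv (fun _ : Fin (n+1) => ι)), Fintype.sum_prod_type]
  refine Finset.sum_congr rfl fun a _ => ?_
  rw [Matrix.diag_apply, path]
  refine Finset.sum_congr rfl fun g _ => ?_
  refine Finset.prod_congr rfl fun i _ => ?_
  rw [Fin.snoc_eq_cons_rotate]
  rfl

lemma cycleOf_comm {J : Type*} [Fintype J] [DecidableEq J] (π : Equiv.Perm J) (x : J) :
    π.cycleOf x * π = π * π.cycleOf x := by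
  ext y
  simp only [Equiv.Perm.mul_apply, Equiv.Perm.cycleOf_apply, Equiv.Perm.sameCycle_apply_right]
  split_ifs <;> rfl

lemma exists_odd {J : Type*} [Fintype J] [DecidableEq J] (σ : Equiv.Perm J) (o i : J)
    (h : ¬ σ.SameCycle o i) :
    ∃ ρ : Equiv.Perm (J ⊕ J), ρ * infl σ = infl σ * ρ ∧ Equiv.Perm.sign ρ = -1 ∧
      ρ (Sum.inl o) = Sum.inl o ∧ ρ (Sum.inr o) = Sum.inr o := by
  have key : ∀ x, (infl σ).SameCycle (Sum.inl i) x → σ.SameCycle i (Sum.elim id id x) := by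
    have inv : ∀ x, σ.SameCycle i (Sum.elim id id (infl σ x)) ↔
        σ.SameCycle i (Sum.elim id id x) := by
      rintro (x | x) <;> simp
    rintro x ⟨k, rfl⟩
    induction k with
    | zero => simpa using Equiv.Perm.SameCycle.refl _ _
    | succ k ih => rw [add_comm, _root_.zpow_add, zpow_one, Equiv.Perm.mul_apply, inv]; exact ih
    | pred k ih => 
      rw [← inv, ← Equiv.Perm.mul_apply, ← _root_.zpow_one_add]
      convert ih using 5
      ring
  have hne : ∀ x, infl σ x ≠ x := by rintro (x | x) <;> simp
  refine ⟨(infl σ).cycleOf (Sum.inl i), cycleOf_comm _ _, ?_, ?_, ?_⟩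
  · rw [(Equiv.Perm.isCycle_cycleOf _ (hne _)).sign]
    have : Even ((infl σ).cycleOf (Sum.inl i)).support.card := by
      rw [← ZMod.natCast_eq_zero_iff_even, ← mul_one (Nat.cast _), ← nsmul_eq_mul, ← Finset.sum_const]
      refine Finset.sum_involution (fun x _ => x.swap) ?_ ?_ ?_ ?_
      · intros; decide
      · rintro (x | x) <;> simp
      · rintro (x | x) hx
        · rw [Equiv.Perm.mem_support_cycleOf_iff] at hx ⊢
          refine ⟨?_, hx.2⟩
          rw [← Equiv.Perm.sameCycle_apply_right] at hx
          exact hx.1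
        · rw [Equiv.Perm.mem_support_cycleOf_iff] at hx ⊢
          refine ⟨?_, hx.2⟩
          rw [← Equiv.Perm.sameCycle_apply_right]
          exact hx.1
      · intros; simp
    rw [this.neg_one_pow]
  · rw [Equiv.Perm.cycleOf_apply, if_neg]
    intro hh
    exact h (key _ hh).symm
  · rw [Equiv.Perm.cycleOf_apply, if_neg]
    intro hh
    exact h (key _ hh).symm

lemma exists_conj (n : ℕ) (σ : Equiv.Perm (Fin (n+2))) (h : ∀ i, σ.SameCycle 0 i) :
    ∃ π : Equiv.Perm (Fin (n+2)), π * finRotate (n+2) * π⁻¹ = σ ∧ π 0 = 0 := by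
  have h1 : σ 0 ≠ 0 := by
    intro h0
    obtain ⟨k, hk⟩ := h 1
    rw [Equiv.Perm.zpow_apply_eq_self_of_apply_eq_self h0] at hk
    exact absurd hk (by simp)
  have hcyc : σ.IsCycle := ⟨0, h1, fun y _ => h y⟩
  have hs : σ.support = Finset.univ := by
    ext x
    simp only [Equiv.Perm.mem_support, Finset.mem_univ, iff_true]
    intro hx
    obtain ⟨k, hk⟩ := (h x).symm
    rw [Equiv.Perm.zpow_apply_eq_self_of_apply_eq_self hx] at hk
    exact h1 (hk ▸ hx)
  have hconj : IsConj (finRotate (n+2)) σ :=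
    isCycle_finRotate.isConj hcyc (by rw [hs, support_finRotate])
  obtain ⟨π, hπ⟩ := isConj_iff.1 hconj
  obtain ⟨k, hk⟩ := (h (π 0)).symm
  refine ⟨σ ^ k * π, ?_, by simpa using hk⟩
  have e : σ ^ k * π * finRotate (n + 2) * (σ ^ k * π)⁻¹ =
      σ ^ k * (π * finRotate (n + 2) * π⁻¹) * (σ ^ k)⁻¹ := by group
  rw [e, hπ]
  group

/-- placement of the variables -/
def v (n : ℕ) (k : Fin ((n+1)*2)) : Fin (n+2) ⊕ Fin (n+2) :=
  if k.1 % 2 = 0 then Sum.inl ⟨k.1 / 2 + 1, by omega⟩ else Sum.inr ⟨k.1 / 2 + 1, by omega⟩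

lemma v_inj (n : ℕ) : Function.Injective (v n) := by
  intro a b h
  unfold v at h
  split_ifs at h <;> simp at h <;> ext <;> omega

lemma v_even (n : ℕ) (i : Fin (n+1)) (h) : v n ⟨i.1 * 2 + 0, h⟩ = Sum.inl i.succ := by
  unfold v
  rw [if_pos (by simp)]
  congr 1
  ext
  simp

lemma v_odd (n : ℕ) (i : Fin (n+1)) (h) : v n ⟨i.1 * 2 + 1, h⟩ = Sum.inr i.succ := by
  unfold v
  rw [if_neg (by simp; try omega)]
  congr 1
  ext
  simp
  try omega

lemma v_ne (n : ℕ) (k) : v n k ≠ Sum.inl 0 ∧ v n k ≠ Sum.inr 0 := by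
  unfold v
  split_ifs <;> simp [Fin.ext_iff]

lemma v_range (n : ℕ) (j) : j ∈ Set.range (v n) ↔ (j ≠ Sum.inl 0 ∧ j ≠ Sum.inr 0) := by
  constructor
  · rintro ⟨k, rfl⟩
    exact v_ne n k
  · rintro ⟨h1, h2⟩
    rcases j with j | j
    · obtain ⟨i, rfl⟩ := Fin.exists_succ_eq.2 (fun h : j = 0 => h1 (by rw [h]))
      exact ⟨⟨i.1 * 2 + 0, by omega⟩, v_even n i _⟩
    · obtain ⟨i, rfl⟩ := Fin.exists_succ_eq.2 (fun h : j = 0 => h2 (by rw [h]))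
      exact ⟨⟨i.1 * 2 + 1, by omega⟩, v_odd n i _⟩

section
variable {ι K : Type*} [Fintype ι] [DecidableEq ι] [CommRing K]

/-- the full family of matrices -/
noncomputable def W (n : ℕ) (z : Matrix ι ι K) (x : Fin ((n+1)*2) → Matrix ι ι K) :
    Fin (n+2) ⊕ Fin (n+2) → Matrix ι ι K :=
  Function.extend (v n) x (Sum.elim (fun _ => z) (fun _ => 1))

lemma W_inl_zero (n : ℕ) (z : Matrix ι ι K) (x) : W n z x (Sum.inl 0) = z := by
  unfold W
  rw [Function.extend_apply']
  · rfl
  · rintro ⟨k, hk⟩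
    exact (v_ne n k).1 hk

lemma W_inr_zero (n : ℕ) (z : Matrix ι ι K) (x) : W n z x (Sum.inr 0) = 1 := by
  unfold W
  rw [Function.extend_apply']
  · rfl
  · rintro ⟨k, hk⟩
    exact (v_ne n k).2 hk

lemma W_v (n : ℕ) (z : Matrix ι ι K) (x) (k) : W n z x (v n k) = x k :=
  (v_inj n).extend_apply _ _ _

noncomputable def G (n : ℕ) (z : Matrix ι ι K) (x : Fin ((n+1)*2) → Matrix ι ι K)
    (π : Equiv.Perm (Fin (n+2) ⊕ Fin (n+2))) : K :=
  ∑ τ : Equiv.Perm (Fin ((n+1)*2)), ((Equiv.Perm.sign τ : ℤˣ) : ℤ) • T π (W n z (x ∘ τ))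

lemma exists_restrict (n : ℕ) (ρ : Equiv.Perm (Fin (n+2) ⊕ Fin (n+2)))
    (h1 : ρ (Sum.inl 0) = Sum.inl 0) (h2 : ρ (Sum.inr 0) = Sum.inr 0) :
    ∃ ρ0 : Equiv.Perm (Fin ((n+1)*2)), Equiv.Perm.sign ρ0 = Equiv.Perm.sign ρ ∧
      ∀ k, ρ (v n k) = v n (ρ0 k) := by
  classical
  have hp : ∀ j, ρ j ∈ Set.range (v n) ↔ j ∈ Set.range (v n) := by
    intro j
    rw [v_range, v_range]
    refine and_congr (not_congr ?_) (not_congr ?_)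
    · conv_lhs => rw [← h1, ρ.injective.eq_iff]
    · conv_lhs => rw [← h2, ρ.injective.eq_iff]
  let e : Fin ((n+1)*2) ≃ {j // j ∈ Set.range (v n)} := Equiv.ofInjective (v n) (v_inj n)
  have he : ∀ k, ((e k : {j // j ∈ Set.range (v n)}) : Fin (n+2) ⊕ Fin (n+2)) = v n k := fun k => rfl
  let ρ0 : Equiv.Perm (Fin ((n+1)*2)) := e.symm.permCongr (ρ.subtypePerm hp)
  have hk : ∀ k, ρ (v n k) = v n (ρ0 k) := by
    intro k
    rw [← he, ← he]
    simp [ρ0, Equiv.permCongr_apply]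
  refine ⟨ρ0, ?_, hk⟩
  rw [← Equiv.Perm.sign_extendDomain ρ0 e]
  congr 1
  ext1 j
  by_cases hj : j ∈ Set.range (v n)
  · obtain ⟨k, rfl⟩ := hj
    rw [hk, ← he, Equiv.Perm.extendDomain_apply_image, he]
  · rw [Equiv.Perm.extendDomain_apply_not_subtype _ _ hj]
    rw [v_range, not_and_or, not_not, not_not] at hj
    rcases hj with rfl | rfl
    · exact h1.symm
    · exact h2.symm

lemma G_conj (n : ℕ) (z : Matrix ι ι K) (x) (ρ π : Equiv.Perm (Fin (n+2) ⊕ Fin (n+2)))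
    (h1 : ρ (Sum.inl 0) = Sum.inl 0) (h2 : ρ (Sum.inr 0) = Sum.inr 0) :
    G n z x (ρ * π * ρ⁻¹) = ((Equiv.Perm.sign ρ : ℤˣ) : ℤ) • G n z x π := by
  obtain ⟨ρ0, hs, hk⟩ := exists_restrict n ρ h1 h2
  unfold G
  rw [← hs, Finset.smul_sum]
  refine Fintype.sum_equiv (Equiv.mulRight ρ0) _ _ fun τ => ?_
  have hW : W n z (x ∘ τ) ∘ ρ = W n z (x ∘ (τ * ρ0 : Equiv.Perm _)) := by
    ext1 j
    by_cases hj : j ∈ Set.range (v n)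
    · obtain ⟨k, rfl⟩ := hj
      rw [Function.comp_apply, hk, W_v, W_v]
      rfl
    · rw [v_range, not_and_or, not_not, not_not] at hj
      rcases hj with rfl | rfl
      · rw [Function.comp_apply, h1, W_inl_zero, W_inl_zero]
      · rw [Function.comp_apply, h2, W_inr_zero, W_inr_zero]
  rw [T_conj, hW, Equiv.coe_mulRight]
  simp only []
  rw [smul_smul, Equiv.Perm.sign_mul]
  congr 1
  rw [mul_comm (Equiv.Perm.sign τ), Units.val_mul, ← mul_assoc, ← Units.val_mul, Int.units_mul_self]
  simp

lemma G_rot (n : ℕ) (z : Matrix ι ι K) (x : Fin ((n+1)*2) → Matrix ι ι K) :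
    G n z x (infl (finRotate (n+2))) = (z * stdPoly _ x).trace := by
  unfold G stdPoly
  rw [Finset.mul_sum, Matrix.trace_sum]
  refine Finset.sum_congr rfl fun τ _ => ?_
  rw [T_infl, T_rot, mul_smul_comm, Matrix.trace_smul]
  congr 2
  rw [List.ofFn_succ, List.prod_cons, W_inl_zero, W_inr_zero, mul_one, List.ofFn_mul,
    List.prod_flatten, List.map_ofFn]
  congr 3
  ext1 i
  simp only [Function.comp_apply, List.ofFn_succ, List.ofFn_zero, List.prod_cons, List.prod_nil,
    mul_one]
  rw [← v_even n i (by omega), ← v_odd n i (by omega), W_v, W_v]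
  rfl

lemma al_domain [IsDomain K] [CharZero K] (n : ℕ) (hn : Fintype.card ι = n + 1)
    (x : Fin ((n+1)*2) → Matrix ι ι K) : stdPoly _ x = 0 := by
  classical
  rw [Matrix.ext_iff_trace_mul_left]
  intro z
  rw [mul_zero, Matrix.trace_zero, ← G_rot]
  have h0 : ∑ σ : Equiv.Perm (Fin (n+2)), ((Equiv.Perm.sign σ : ℤˣ) : ℤ) • G n z x (infl σ) = 0 := by
    simp only [G, Finset.smul_sum]
    rw [Finset.sum_comm]
    refine Finset.sum_eq_zero fun τ _ => ?_
    simp only [T_infl]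
    simp only [smul_comm _ ((Equiv.Perm.sign τ : ℤˣ) : ℤ)]
    rw [← Finset.smul_sum, sum_T (by simp [hn]), smul_zero]
  have h1 : ∀ σ : Equiv.Perm (Fin (n+2)), ((Equiv.Perm.sign σ : ℤˣ) : ℤ) • G n z x (infl σ) =
      if ∀ i, σ.SameCycle 0 i then ((Equiv.Perm.sign (finRotate (n+2)) : ℤˣ) : ℤ) •
        G n z x (infl (finRotate (n+2))) else 0 := by
    intro σ
    split_ifs with h
    · obtain ⟨π, rfl, hπ⟩ := exists_conj n σ h
      rw [infl_conj, G_conj _ _ _ _ _ (by simp [hπ]) (by simp [hπ])]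
      have e1 : Equiv.Perm.sign (π * finRotate (n + 2) * π⁻¹) = Equiv.Perm.sign (finRotate (n + 2)) := by
        rw [map_mul, map_mul, map_inv, mul_inv_cancel_comm]
      rw [e1, Equiv.Perm.sign_sumCongr, Int.units_mul_self, Units.val_one, one_smul]
    · push Not at h
      obtain ⟨i, hi⟩ := h
      obtain ⟨ρ, hc, hs, h1, h2⟩ := exists_odd σ 0 i hi
      have := G_conj n z x ρ (infl σ) h1 h2
      rw [hc, mul_inv_cancel_right, hs] at this
      simp only [Units.val_neg, Units.val_one, neg_smul, one_smul] at this
      rw [self_eq_neg.1 this, smul_zero]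
  rw [Finset.sum_congr rfl fun σ _ => h1 σ, ← Finset.sum_filter, Finset.sum_const, smul_eq_zero] at h0
  rcases h0 with h0 | h0
  · exfalso
    rw [Finset.card_eq_zero] at h0
    have : finRotate (n+2) ∈ (∅ : Finset (Equiv.Perm (Fin (n+2)))) := by
      rw [← h0, Finset.mem_filter]
      refine ⟨Finset.mem_univ _, fun i => ?_⟩
      have hs : ∀ i, finRotate (n+2) i ≠ i := fun i => by
        rw [← Equiv.Perm.mem_support, support_finRotate]; simp
      exact isCycle_finRotate.sameCycle (hs _) (hs _)
    simp at this
  · exact (smul_eq_zero.1 h0).resolve_left (Units.ne_zero _)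
end

lemma stdPoly_map {R S : Type*} [Ring R] [Ring S] (f : R →+* S) (d : ℕ) (x : Fin d → R) :
    f (stdPoly d x) = stdPoly d (fun i => f (x i)) := by
  unfold stdPoly
  rw [map_sum]
  refine Finset.sum_congr rfl fun σ _ => ?_
  rw [map_zsmul, map_list_prod, List.map_ofFn]
  rfl

/-- Amitsur-Levitzki over any commutative ring. -/
theorem amitsur_levitzki {ι K : Type*} [Fintype ι] [DecidableEq ι] [CommRing K] (d N : ℕ)
    (hd : d = 2 * N) (hN : 0 < N) (hn : Fintype.card ι = N)
    (x : Fin d → Matrix ι ι K) : stdPoly d x = 0 := by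
  obtain ⟨n, rfl⟩ : ∃ n, N = n + 1 := ⟨N - 1, by omega⟩
  rw [mul_comm] at hd
  subst hd
  let X : Fin ((n+1)*2) → Matrix ι ι (MvPolynomial (Fin ((n+1)*2) × ι × ι) ℤ) :=
    fun k => Matrix.of fun i j => MvPolynomial.X (k, i, j)
  let f : MvPolynomial (Fin ((n+1)*2) × ι × ι) ℤ →+* K :=
    MvPolynomial.eval₂Hom (Int.castRingHom K) (fun p => x p.1 p.2.1 p.2.2)
  have h := congrArg (f.mapMatrix (m := ι)) (al_domain n hn X)
  rw [stdPoly_map, map_zero] at h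
  rw [← h]
  congr 1
  ext k i j
  simp [X, f]

/-- comparison between the block algebra and matrices over polynomials -/
def Rel {F : Type*} [Field F] {ℓ m : ℕ}
    (M : Matrix (Fin ℓ ⊕ (Fin m ⊕ Fin ℓ)) (Fin ℓ ⊕ (Fin m ⊕ Fin ℓ)) F)
    (N : Matrix (Fin ℓ ⊕ Fin m) (Fin ℓ ⊕ Fin m) (Polynomial F)) : Prop :=
  memA M ∧
  (∀ i j, (N (Sum.inl i) (Sum.inl j)).coeff 0 = M (Sum.inl i) (Sum.inl j)) ∧
  (∀ i j, (N (Sum.inl i) (Sum.inl j)).coeff 1 = 0) ∧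
  (∀ i j, (N (Sum.inl i) (Sum.inl j)).coeff 2 = M (Sum.inl i) (Sum.inr (Sum.inr j))) ∧
  (∀ i j, (N (Sum.inl i) (Sum.inr j)).coeff 0 = 0) ∧
  (∀ i j, (N (Sum.inl i) (Sum.inr j)).coeff 1 = M (Sum.inl i) (Sum.inr (Sum.inl j))) ∧
  (∀ i j, (N (Sum.inr i) (Sum.inl j)).coeff 0 = 0) ∧
  (∀ i j, (N (Sum.inr i) (Sum.inl j)).coeff 1 = M (Sum.inr (Sum.inl i)) (Sum.inr (Sum.inr j))) ∧
  (∀ i j, (N (Sum.inr i) (Sum.inr j)).coeff 0 = M (Sum.inr (Sum.inl i)) (Sum.inr (Sum.inl j)))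

section
variable {F : Type*} [Field F] {ℓ m : ℕ}

lemma Rel.zero_right {M : Matrix (Fin ℓ ⊕ (Fin m ⊕ Fin ℓ)) (Fin ℓ ⊕ (Fin m ⊕ Fin ℓ)) F}
    (h : Rel M 0) : M = 0 := by
  obtain ⟨⟨a1, a2, a3, a4⟩, h1, h2, h3, h4, h5, h6, h7, h8⟩ := h
  simp only [Matrix.zero_apply, Polynomial.coeff_zero] at *
  ext (i | i | i) (j | j | j) <;> simp [*, ← h1, ← h3, ← h5, ← h7, ← h8]

lemma Rel.zero : Rel (0 : Matrix (Fin ℓ ⊕ (Fin m ⊕ Fin ℓ)) (Fin ℓ ⊕ (Fin m ⊕ Fin ℓ)) F) 0 := by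
  simp [Rel, memA]

lemma Rel.one : Rel (1 : Matrix (Fin ℓ ⊕ (Fin m ⊕ Fin ℓ)) (Fin ℓ ⊕ (Fin m ⊕ Fin ℓ)) F) 1 := by
  simp [Rel, memA, Matrix.one_apply]
  refine ⟨?_, ?_, ?_, ?_⟩ <;> intro i j <;> split_ifs <;> simp [Polynomial.coeff_one]

lemma Rel.add {M M' : Matrix (Fin ℓ ⊕ (Fin m ⊕ Fin ℓ)) (Fin ℓ ⊕ (Fin m ⊕ Fin ℓ)) F} {N N'}
    (h : Rel M N) (h' : Rel M' N') : Rel (M + M') (N + N') := by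
  obtain ⟨⟨a1, a2, a3, a4⟩, h1, h2, h3, h4, h5, h6, h7, h8⟩ := h
  obtain ⟨⟨a1', a2', a3', a4'⟩, h1', h2', h3', h4', h5', h6', h7', h8'⟩ := h'
  simp [Rel, memA, *]

lemma Rel.zsmul {M : Matrix (Fin ℓ ⊕ (Fin m ⊕ Fin ℓ)) (Fin ℓ ⊕ (Fin m ⊕ Fin ℓ)) F} {N}
    (h : Rel M N) (c : ℤ) : Rel (c • M) (c • N) := by
  obtain ⟨⟨a1, a2, a3, a4⟩, h1, h2, h3, h4, h5, h6, h7, h8⟩ := h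
  simp [Rel, memA, *]

lemma Rel.mul {M M' : Matrix (Fin ℓ ⊕ (Fin m ⊕ Fin ℓ)) (Fin ℓ ⊕ (Fin m ⊕ Fin ℓ)) F} {N N'}
    (h : Rel M N) (h' : Rel M' N') : Rel (M * M') (N * N') := by
  obtain ⟨⟨a1, a2, a3, a4⟩, h1, h2, h3, h4, h5, h6, h7, h8⟩ := h
  obtain ⟨⟨a1', a2', a3', a4'⟩, h1', h2', h3', h4', h5', h6', h7', h8'⟩ := h'
  have c1 : ∀ p q : Polynomial F, (p * q).coeff 1 = p.coeff 0 * q.coeff 1 + p.coeff 1 * q.coeff 0 := by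
    intro p q
    rw [Polynomial.coeff_mul, Finset.Nat.sum_antidiagonal_eq_sum_range_succ_mk]
    simp [Finset.sum_range_succ]
  have c2 : ∀ p q : Polynomial F, (p * q).coeff 2 =
      p.coeff 0 * q.coeff 2 + p.coeff 1 * q.coeff 1 + p.coeff 2 * q.coeff 0 := by
    intro p q
    rw [Polynomial.coeff_mul, Finset.Nat.sum_antidiagonal_eq_sum_range_succ_mk]
    simp [Finset.sum_range_succ]
  simp [Rel, memA, Matrix.mul_apply, Polynomial.finsetSum_coeff, Polynomial.mul_coeff_zero,
    c1, c2, Finset.sum_add_distrib, *]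
  refine ⟨?_, ?_⟩ <;> intros <;> abel

lemma Rel.sum {α : Type*} (s : Finset α)
    {f : α → Matrix (Fin ℓ ⊕ (Fin m ⊕ Fin ℓ)) (Fin ℓ ⊕ (Fin m ⊕ Fin ℓ)) F}
    {g : α → Matrix (Fin ℓ ⊕ Fin m) (Fin ℓ ⊕ Fin m) (Polynomial F)}
    (h : ∀ a ∈ s, Rel (F := F) (ℓ := ℓ) (m := m) (f a) (g a)) :
    Rel (∑ a ∈ s, f a) (∑ a ∈ s, g a) := by
  classical
  induction s using Finset.induction_on with
  | empty => simpa using Rel.zero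
  | insert a s ha ih =>
    rw [Finset.sum_insert ha, Finset.sum_insert ha]
    exact (h a (by simp)).add (ih fun b hb => h b (by simp [hb]))

lemma Rel.prod (d : ℕ)
    {f : Fin d → Matrix (Fin ℓ ⊕ (Fin m ⊕ Fin ℓ)) (Fin ℓ ⊕ (Fin m ⊕ Fin ℓ)) F}
    {g : Fin d → Matrix (Fin ℓ ⊕ Fin m) (Fin ℓ ⊕ Fin m) (Polynomial F)}
    (h : ∀ a : Fin d, Rel (F := F) (ℓ := ℓ) (m := m) (f a) (g a)) :
    Rel (List.ofFn f).prod (List.ofFn g).prod := by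
  induction d with
  | zero => simpa using Rel.one
  | succ d ih =>
    rw [List.ofFn_succ, List.ofFn_succ, List.prod_cons, List.prod_cons]
    exact (h 0).mul (ih fun a => h a.succ)

lemma Rel.exists {M : Matrix (Fin ℓ ⊕ (Fin m ⊕ Fin ℓ)) (Fin ℓ ⊕ (Fin m ⊕ Fin ℓ)) F}
    (h : memA M) : ∃ N, Rel M N := by
  refine ⟨Matrix.fromBlocks
    (Matrix.of fun i j => Polynomial.C (M (Sum.inl i) (Sum.inl j)) +
      Polynomial.C (M (Sum.inl i) (Sum.inr (Sum.inr j))) * Polynomial.X ^ 2)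
    (Matrix.of fun i j => Polynomial.C (M (Sum.inl i) (Sum.inr (Sum.inl j))) * Polynomial.X)
    (Matrix.of fun i j => Polynomial.C (M (Sum.inr (Sum.inl i)) (Sum.inr (Sum.inr j))) * Polynomial.X)
    (Matrix.of fun i j => Polynomial.C (M (Sum.inr (Sum.inl i)) (Sum.inr (Sum.inl j)))), h, ?_⟩
  simp [Polynomial.coeff_C, Polynomial.coeff_X_pow]
end
end AL

/-- The algebra of block matrices `[[a,b,c],[0,e,d],[0,0,a]]` inside `M_{2ℓ+m}(F)`
satisfies the standard identity `s_{2(ℓ+m)}`. -/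
theorem repeated_corner_satisfies (F : Type*) [Field F] (ℓ m : ℕ) (hℓ : 0 < ℓ) (hm : 0 < m) :
    ∀ x : Fin (2 * (ℓ + m)) → Matrix (Fin ℓ ⊕ (Fin m ⊕ Fin ℓ)) (Fin ℓ ⊕ (Fin m ⊕ Fin ℓ)) F,
      (∀ k, memA (x k)) → stdPoly (2 * (ℓ + m)) x = 0 := by
  intro x hx
  choose y hy using fun k => AL.Rel.exists (hx k)
  have h0 : stdPoly (2 * (ℓ + m)) y = 0 :=
    AL.amitsur_levitzki _ (ℓ + m) rfl (by omega) (by simp) y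
  have h : AL.Rel (stdPoly (2 * (ℓ + m)) x) (stdPoly (2 * (ℓ + m)) y) :=
    AL.Rel.sum _ fun σ _ => (AL.Rel.prod _ fun i => hy (σ i)).zsmul _
  rw [h0] at h
  exact h.zero_right
end

section
/- With t = 2(ℓ+m), for any matrices M_1,...,M_t of block form [[a_k, b_k, 0],[0, e_k, d_k],[0, 0, a_k]] (with a_k ∈ M_ℓ(F), e_k ∈ M_m(F), b_k ∈ M_{ℓ×m}(F), d_k ∈ M_{m×ℓ}(F)), the upper-right ℓ×ℓ block of s_t(M_1,...,M_t) is zero. -/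
open Matrix

section Newton
open Polynomial

theorem derivative_det_aux {R n : Type*} [CommRing R] [Fintype n] [DecidableEq n]
    (M : Matrix n n R[X]) :
    derivative M.det = ∑ i, (M.updateRow i (fun j => derivative (M i j))).det := by
  rw [← Matrix.det_transpose M]
  have h : ∀ i, (M.updateRow i (fun j => derivative (M i j))).det =
      ∑ σ : Equiv.Perm n, ((Equiv.Perm.sign σ : ℤ) : R[X]) *
        ((∏ j ∈ Finset.univ.erase i, M j (σ j)) * derivative (M i (σ i))) := by
    intro i
    rw [← Matrix.det_transpose, Matrix.det_apply']
    refine Finset.sum_congr rfl fun σ _ => ?_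
    congr 1
    rw [← Finset.prod_erase_mul _ _ (Finset.mem_univ i)]
    simp only [Matrix.transpose_apply, Matrix.updateRow_self]
    congr 1
    refine Finset.prod_congr rfl fun j hj => ?_
    rw [Matrix.updateRow_ne (Finset.ne_of_mem_erase hj)]
  simp_rw [h]
  rw [Finset.sum_comm, Matrix.det_apply', derivative_sum]
  refine Finset.sum_congr rfl fun σ _ => ?_
  rw [← Finset.mul_sum, derivative_mul, derivative_intCast, zero_mul, zero_add,
    derivative_prod_finset]
  rfl

theorem derivative_charpoly_aux {R n : Type*} [CommRing R] [Fintype n] [DecidableEq n]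
    (Y : Matrix n n R) :
    derivative Y.charpoly = (Matrix.adjugate (Matrix.charmatrix Y)).trace := by
  rw [Matrix.charpoly, derivative_det_aux, Matrix.trace]
  refine Finset.sum_congr rfl fun i _ => ?_
  rw [Matrix.diag_apply, Matrix.adjugate_apply]
  congr 2
  ext1 j
  by_cases h : i = j
  · subst h; simp [Matrix.charmatrix_apply_eq]
  · rw [Matrix.charmatrix_apply_ne _ _ _ h, Pi.single_eq_of_ne (Ne.symm h)]
    simp

theorem pow_card_eq_zero_of_trace {R n : Type*} [CommRing R] [Algebra ℚ R] [Fintype n]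
    [DecidableEq n] (Y : Matrix n n R) (hY : ∀ k, (Y ^ (k + 1)).trace = 0) :
    Y ^ Fintype.card n = 0 := by
  nontriviality R
  set P := matPolyEquiv (Matrix.adjugate (Matrix.charmatrix Y)) with hP
  have key : (X - C Y) * P = Y.charpoly.map (algebraMap R (Matrix n n R)) := by
    rw [hP, ← Matrix.matPolyEquiv_charmatrix, ← map_mul, Matrix.mul_adjugate,
      ← Matrix.charpoly, matPolyEquiv_smul_one]
  have h0 : -(Y * P.coeff 0) = Y.charpoly.coeff 0 • (1 : Matrix n n R) := by
    have := congrArg (fun p => coeff p 0) key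
    simpa [sub_mul, Algebra.algebraMap_eq_smul_one] using this
  have hs : ∀ k, P.coeff k = Y * P.coeff (k + 1) +
      Y.charpoly.coeff (k + 1) • (1 : Matrix n n R) := by
    intro k
    have := congrArg (fun p => coeff p (k + 1)) key
    simp only [sub_mul, coeff_sub, coeff_X_mul, coeff_C_mul, coeff_map,
      Algebra.algebraMap_eq_smul_one] at this
    rw [← this]; abel
  have htr : ∀ d k s, P.natDegree < k + d → (Y ^ (s + 1) * P.coeff k).trace = 0 := by
    intro d
    induction d with
    | zero =>
      intro k s h
      rw [coeff_eq_zero_of_natDegree_lt (by simpa using h)]; simp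
    | succ d ih =>
      intro k s h
      rw [hs k, mul_add, ← mul_assoc, ← pow_succ, Matrix.trace_add, ih (k + 1) (s + 1) (by omega)]
      simp [hY]
  have htr' : ∀ k, (Y * P.coeff k).trace = 0 := fun k => by
    simpa using htr (P.natDegree + 1) k 0 (by omega)
  have hd : ∀ k, (P.coeff k).trace = Y.charpoly.coeff (k + 1) * (k + 1) := by
    intro k
    rw [← coeff_derivative, derivative_charpoly_aux, Matrix.trace, Matrix.trace,
      finsetSum_coeff]
    simp [hP, matPolyEquiv_coeff_apply]
  have hcoef : ∀ j, j ≠ Fintype.card n → Y.charpoly.coeff j = 0 := by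
    have hinj : ∀ (q : ℤ) (r : R), q ≠ 0 → (q : R) * r = 0 → r = 0 := by
      intro q r hq h
      have h1 : (q : ℚ) • r = 0 := by
        rw [Algebra.smul_def]; simpa using h
      have h2 := congrArg (fun z => (q : ℚ)⁻¹ • z) h1
      simpa [smul_smul, inv_mul_cancel₀ (Int.cast_ne_zero.mpr hq : (q : ℚ) ≠ 0)] using h2
    intro j hj
    apply hinj ((Fintype.card n : ℤ) - j) _ (by omega)
    cases j with
    | zero =>
      have := congrArg Matrix.trace h0
      rw [Matrix.trace_neg, htr', Matrix.trace_smul, Matrix.trace_one] at this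
      simp only [neg_zero, smul_eq_mul] at this
      push_cast
      linear_combination -this
    | succ k =>
      have := congrArg Matrix.trace (hs k)
      rw [Matrix.trace_add, htr', Matrix.trace_smul, Matrix.trace_one, hd] at this
      simp only [smul_eq_mul] at this
      push_cast
      linear_combination -this
  have hch : Y.charpoly = X ^ Fintype.card n := by
    ext j
    rw [coeff_X_pow]
    split_ifs with h
    · have := Y.charpoly_monic
      rw [Monic, leadingCoeff, Matrix.charpoly_natDegree_eq_dim] at this
      rw [h, this]
    · exact hcoef j h
  have := Matrix.aeval_self_charpoly Y
  rwa [hch, map_pow, aeval_X] at this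

end Newton

section Super
open Polynomial

/-- Odd part of a supercommutative algebra, abstractly. -/
structure OddPart {Λ : Type*} [Ring Λ] [Algebra ℚ Λ] (O : Submodule ℚ Λ) : Prop where
  central : ∀ x ∈ O, ∀ y ∈ O, x * y ∈ Subalgebra.center ℚ Λ
  anti : ∀ x ∈ O, ∀ y ∈ O, x * y = -(y * x)
  triple : ∀ x ∈ O, ∀ y ∈ O, ∀ z ∈ O, x * y * z ∈ O

/-- All entries odd. -/
def OddMat {Λ : Type*} [Ring Λ] [Algebra ℚ Λ] (O : Submodule ℚ Λ) {p q : Type*}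
    (X : Matrix p q Λ) : Prop := ∀ i j, X i j ∈ O

variable {Λ : Type*} [Ring Λ] [Algebra ℚ Λ] {O : Submodule ℚ Λ}

theorem OddMat.triple (hO : OddPart O) {p q r s : Type*} [Fintype q] [Fintype r]
    {X : Matrix p q Λ} {Y : Matrix q r Λ} {Z : Matrix r s Λ}
    (hX : OddMat O X) (hY : OddMat O Y) (hZ : OddMat O Z) : OddMat O (X * Y * Z) := by
  intro i j
  simp only [Matrix.mul_apply, Finset.sum_mul]
  exact Submodule.sum_mem _ fun a _ => Submodule.sum_mem _ fun b _ =>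
    hO.triple _ (hX _ _) _ (hY _ _) _ (hZ _ _)

theorem OddMat.mul_pow_even (hO : OddPart O) {p q : Type*} [Fintype q] [DecidableEq q]
    {X : Matrix p q Λ} {Y : Matrix q q Λ}
    (hX : OddMat O X) (hY : OddMat O Y) (k : ℕ) : OddMat O (X * Y ^ (2 * k)) := by
  induction k with
  | zero => simpa using hX
  | succ k ih =>
    have : X * Y ^ (2 * (k + 1)) = X * Y ^ (2 * k) * Y * Y := by
      rw [show 2 * (k + 1) = 2 * k + 1 + 1 by ring, pow_succ, pow_succ]
      simp only [Matrix.mul_assoc]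
    rw [this]
    exact ih.triple hO hY hY

theorem trace_odd_mul (hO : OddPart O) {n : Type*} [Fintype n]
    {X Y : Matrix n n Λ} (hX : OddMat O X) (hY : OddMat O Y) :
    (X * Y).trace = -(Y * X).trace := by
  simp only [Matrix.trace, Matrix.diag_apply, Matrix.mul_apply]
  rw [Finset.sum_comm, ← Finset.sum_neg_distrib]
  refine Finset.sum_congr rfl fun i _ => ?_
  rw [← Finset.sum_neg_distrib]
  exact Finset.sum_congr rfl fun j _ => hO.anti _ (hX _ _) _ (hY _ _)

theorem odd_pow_eq_zero (hO : OddPart O) {n : Type*} [Fintype n] [DecidableEq n]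
    (X : Matrix n n Λ) (hX : OddMat O X) : X ^ (2 * Fintype.card n) = 0 := by
  let Y : Matrix n n (Subalgebra.center ℚ Λ) := Matrix.of fun i j =>
    ⟨(X * X) i j, by
      rw [Matrix.mul_apply]
      exact Subalgebra.sum_mem _ fun a _ => hO.central _ (hX _ _) _ (hX _ _)⟩
  let f : Subalgebra.center ℚ Λ →+* Λ := (Subalgebra.center ℚ Λ).val.toRingHom
  have hf : Function.Injective f := Subtype.val_injective
  have hYX : f.mapMatrix Y = X ^ 2 := by
    rw [pow_two]; ext i j; rfl
  have hpow : ∀ k, f.mapMatrix (Y ^ k) = X ^ (2 * k) := fun k => by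
    rw [map_pow, hYX, pow_mul]
  have htr : ∀ k, (Y ^ (k + 1)).trace = 0 := by
    intro k
    apply hf
    rw [map_zero]
    have h1 : f (Y ^ (k + 1)).trace = (X ^ (2 * (k + 1))).trace := by
      rw [← hpow]
      simp [Matrix.trace]
    rw [h1]
    have h2 : X ^ (2 * (k + 1)) = X * (X * X ^ (2 * k)) := by
      rw [← pow_succ', ← pow_succ']; rfl
    have h3 := trace_odd_mul hO hX (hX.mul_pow_even hO hX k)
    have h4 : X * X ^ (2 * k) * X = X * (X * X ^ (2 * k)) := by
      rw [← pow_succ', ← pow_succ, ← pow_succ']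
    rw [h4, ← h2] at h3
    have h5 : (2 : ℚ) • (X ^ (2 * (k + 1))).trace = 0 := by
      rw [two_smul]; nth_rewrite 1 [h3]; simp
    exact (smul_eq_zero_iff_right (two_ne_zero : (2 : ℚ) ≠ 0)).1 h5
  have := pow_card_eq_zero_of_trace Y htr
  rw [← hpow, this, map_zero]

/-- `∑_{p+r=n-1} A^p C A^r`. -/
def GG {T : Type*} [Ring T] (A : T) (c : T) : ℕ → T
  | 0 => 0
  | n + 1 => A ^ n * c + GG A c n * A

theorem GG_zero {T : Type*} [Ring T] (A : T) (n : ℕ) : GG A 0 n = 0 := by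
  induction n with
  | zero => rfl
  | succ n ih => simp [GG, ih]

theorem GG_mul {T : Type*} [Ring T] (A c : T) (n : ℕ) : GG A (c * A) n = GG A c n * A := by
  induction n with
  | zero => simp [GG]
  | succ n ih => simp only [GG, ih, add_mul, mul_assoc]

theorem poly_eq_zero_of_eval {T : Type*} [Ring T] [Algebra ℚ T] (p : T[X])
    (h : ∀ q : ℚ, p.eval (algebraMap ℚ T q) = 0) : p = 0 := by
  ext k
  rw [coeff_zero, ← Module.forall_dual_apply_eq_zero_iff ℚ]
  intro f
  let P : ℚ[X] := ∑ i ∈ p.support, monomial i (f (p.coeff i))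
  have hP : P = 0 := by
    apply Polynomial.funext
    intro q
    have := congrArg f (h q)
    rw [eval_eq_sum, Polynomial.sum, map_sum, map_zero] at this
    rw [eval_zero, ← this, eval_finsetSum]
    refine Finset.sum_congr rfl fun i _ => ?_
    rw [eval_monomial, ← map_pow, ← Algebra.commutes, ← Algebra.smul_def, map_smul, smul_eq_mul,
      mul_comm]
  have h2 : P.coeff k = f (p.coeff k) := by
    simp only [P, finsetSum_coeff, coeff_monomial]
    rw [Finset.sum_ite_eq']
    split_ifs with hk
    · rfl
    · rw [notMem_support_iff.1 hk, map_zero]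
  rw [← h2, hP, coeff_zero]

theorem GG_eq_zero {T : Type*} [Ring T] [Algebra ℚ T] (A c : T) (n : ℕ)
    (h : ∀ q : ℚ, (A + q • c) ^ n = 0) : GG A c n = 0 := by
  let p : T[X] := C A + C c * X
  have h0 : ∀ n, (p ^ n).coeff 0 = A ^ n ∧ (p ^ n).coeff 1 = GG A c n := by
    intro n
    induction n with
    | zero => simp [GG, coeff_one]
    | succ n ih =>
      have e : p ^ (n + 1) = p ^ n * C A + p ^ n * C c * X := by
        rw [pow_succ, mul_add, mul_assoc]
      rw [e]
      constructor
      · simp [ih.1, pow_succ]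
      · simp [ih.1, ih.2, GG, coeff_mul_X, add_comm]
  have hz : p ^ n = 0 := by
    apply poly_eq_zero_of_eval
    intro q
    let φ : T[X] →+* T := eval₂RingHom' (RingHom.id T) (algebraMap ℚ T q)
      (fun a => (Algebra.commutes q a).symm)
    have h1 : φ (p ^ n) = (A + q • c) ^ n := by
      rw [map_pow]
      congr 1
      simp only [φ, p]
      change eval _ _ = _
      rw [eval_add, eval_C, eval_mul_X, eval_C, ← Algebra.commutes, ← Algebra.smul_def]
    rw [h] at h1
    exact h1
  rw [← (h0 n).2, hz, coeff_zero]

theorem GG_odd (hO : OddPart O) {n : Type*} [Fintype n] [DecidableEq n]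
    {A c : Matrix n n Λ} (hA : OddMat O A) (hc : OddMat O c) (N : ℕ)
    (hN : 2 * Fintype.card n ≤ N) : GG A c N = 0 := by
  apply GG_eq_zero
  intro q
  apply pow_eq_zero_of_le hN
  apply odd_pow_eq_zero hO
  intro i j
  exact O.add_mem (hA i j) (O.smul_mem q (hc i j))

theorem ur_super (hO : OddPart O) {p q : Type*} [Fintype p] [DecidableEq p]
    [Fintype q] [DecidableEq q]
    {A : Matrix p p Λ} {B : Matrix p q Λ} {E : Matrix q q Λ} {D : Matrix q p Λ}
    (hA : OddMat O A) (hB : OddMat O B) (hE : OddMat O E) (hD : OddMat O D) (i j : p) :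
    ((Matrix.fromBlocks A (Matrix.fromCols B 0) 0 (Matrix.fromBlocks E D 0 A)) ^
      (2 * (Fintype.card p + Fintype.card q))) (Sum.inl i) (Sum.inr (Sum.inr j)) = 0 := by
  set M := Matrix.fromBlocks A (Matrix.fromCols B 0) 0 (Matrix.fromBlocks E D 0 A) with hM
  have hpow : ∀ N, ∃ Z, M ^ N = Matrix.fromBlocks (A ^ N)
      (Matrix.fromCols (∑ k ∈ Finset.range N, A ^ (N - 1 - k) * B * E ^ k)
        (∑ k ∈ Finset.range N, GG A (B * E ^ k * D) (N - 1 - k))) 0 Z := by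
    intro N
    induction N with
    | zero =>
      refine ⟨1, ?_⟩
      simp only [pow_zero, Finset.range_zero, Finset.sum_empty]
      rw [Matrix.fromCols_zero, Matrix.fromBlocks_one]
    | succ N ih =>
      obtain ⟨Z, hZ⟩ := ih
      rw [pow_succ, hZ, hM, Matrix.fromBlocks_multiply]
      refine ⟨Z * Matrix.fromBlocks E D 0 A, ?_⟩
      congr 1
      · simp [pow_succ]
      · have hP : A ^ N * B + (∑ k ∈ Finset.range N, A ^ (N - 1 - k) * B * E ^ k) * E =
            ∑ k ∈ Finset.range (N + 1), A ^ (N + 1 - 1 - k) * B * E ^ k := by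
          rw [Finset.sum_range_succ', Matrix.sum_mul, add_comm]
          congr 1
          · refine Finset.sum_congr rfl fun k _ => ?_
            rw [show N + 1 - 1 - (k + 1) = N - 1 - k by omega, pow_succ]
            simp only [Matrix.mul_assoc]
          · simp
        have hQ : (∑ k ∈ Finset.range N, A ^ (N - 1 - k) * B * E ^ k) * D +
            (∑ k ∈ Finset.range N, GG A (B * E ^ k * D) (N - 1 - k)) * A =
            ∑ k ∈ Finset.range (N + 1), GG A (B * E ^ k * D) (N + 1 - 1 - k) := by
          rw [Finset.sum_range_succ, Matrix.sum_mul, Matrix.sum_mul, ← Finset.sum_add_distrib,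
            show N + 1 - 1 - N = 0 by omega, GG, add_zero]
          refine Finset.sum_congr rfl fun k hk => ?_
          rw [Finset.mem_range] at hk
          rw [show N + 1 - 1 - k = (N - 1 - k) + 1 by omega, GG]
          simp only [Matrix.mul_assoc]
        rw [← hP, ← hQ, Matrix.mul_fromCols, Matrix.fromCols_mul_fromBlocks]
        ext a (b | b)
        · simp
        · simp
      · simp
      · simp
  obtain ⟨Z, hZ⟩ := hpow (2 * (Fintype.card p + Fintype.card q))
  rw [hZ, Matrix.fromBlocks_apply₁₂, Matrix.fromCols_apply_inr]
  have : (∑ k ∈ Finset.range (2 * (Fintype.card p + Fintype.card q)),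
      GG A (B * E ^ k * D) (2 * (Fintype.card p + Fintype.card q) - 1 - k)) = 0 := by
    refine Finset.sum_eq_zero fun k hk => ?_
    rw [Finset.mem_range] at hk
    by_cases hkq : 2 * Fintype.card q ≤ k
    · rw [pow_eq_zero_of_le hkq (odd_pow_eq_zero hO E hE)]
      simp [GG_zero]
    · rcases Nat.even_or_odd' k with ⟨u, rfl | rfl⟩
      · obtain ⟨v, hv⟩ : ∃ v, 2 * (Fintype.card p + Fintype.card q) - 1 - 2 * u = v + 1 :=
          ⟨2 * (Fintype.card p + Fintype.card q) - 1 - 2 * u - 1, by omega⟩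
        rw [hv, GG, ← GG_mul, pow_eq_zero_of_le (by omega) (odd_pow_eq_zero hO A hA),
          GG_odd hO hA ((hB.mul_pow_even hO hE u).triple hO hD hA) v (by omega)]
        simp
      · refine GG_odd hO hA ?_ _ (by omega)
        rw [pow_succ, ← Matrix.mul_assoc]
        exact (hB.mul_pow_even hO hE u).triple hO hE hD
  rw [this]; rfl

end Super

section Ext

theorem ext_even_central {K V : Type*} [CommRing K] [AddCommGroup V] [Module K V]
    (x : ExteriorAlgebra K V) (hx : x ∈ CliffordAlgebra.evenOdd (0 : QuadraticForm K V) 0)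
    (y : ExteriorAlgebra K V) : x * y = y * x := by
  have hι : ∀ v w : V, ExteriorAlgebra.ι K v * ExteriorAlgebra.ι K w =
      -(ExteriorAlgebra.ι K w * ExteriorAlgebra.ι K v) := fun v w =>
    eq_neg_of_add_eq_zero_left (ExteriorAlgebra.ι_add_mul_swap v w)
  have h2 : ∀ a b v : V, (ExteriorAlgebra.ι K a * ExteriorAlgebra.ι K b) * ExteriorAlgebra.ι K v =
      ExteriorAlgebra.ι K v * (ExteriorAlgebra.ι K a * ExteriorAlgebra.ι K b) := by
    intro a b v
    rw [mul_assoc, hι b v, mul_neg, ← mul_assoc, hι a v, neg_mul, neg_neg, mul_assoc]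
  have h1 : ∀ v : V, x * ExteriorAlgebra.ι K v = ExteriorAlgebra.ι K v * x := by
    intro v
    induction x, hx using CliffordAlgebra.even_induction with
    | algebraMap r => exact Algebra.commutes _ _
    | add x y _ _ hx hy => rw [add_mul, mul_add, hx, hy]
    | ι_mul_ι_mul a b x _ ih =>
      rw [mul_assoc, ih, ← mul_assoc, ← mul_assoc]
      congr 1
      exact h2 a b v
  induction y using ExteriorAlgebra.induction with
  | algebraMap r => exact (Algebra.commutes _ _).symm
  | ι v => exact h1 v
  | mul a b ha hb => rw [← mul_assoc, ha, mul_assoc, hb, mul_assoc]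
  | add a b ha hb => rw [add_mul, mul_add, ha, hb]

theorem ext_odd_anti {K V : Type*} [CommRing K] [AddCommGroup V] [Module K V]
    (x : ExteriorAlgebra K V) (hx : x ∈ CliffordAlgebra.evenOdd (0 : QuadraticForm K V) 1)
    (y : ExteriorAlgebra K V) (hy : y ∈ CliffordAlgebra.evenOdd (0 : QuadraticForm K V) 1) :
    x * y = -(y * x) := by
  have hc : ∀ a b : V, ∀ z : ExteriorAlgebra K V,
      (CliffordAlgebra.ι (0 : QuadraticForm K V) a * CliffordAlgebra.ι (0 : QuadraticForm K V) b)
        * z = z * (CliffordAlgebra.ι (0 : QuadraticForm K V) a *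
          CliffordAlgebra.ι (0 : QuadraticForm K V) b) := fun a b z =>
    ext_even_central _ (CliffordAlgebra.ι_mul_ι_mem_evenOdd_zero _ a b) z
  induction x, hx using CliffordAlgebra.odd_induction with
  | ι v =>
    induction y, hy using CliffordAlgebra.odd_induction with
    | ι w => exact eq_neg_of_add_eq_zero_left (ExteriorAlgebra.ι_add_mul_swap v w)
    | add x y _ _ hx hy => rw [add_mul, mul_add, hx, hy, neg_add]
    | ι_mul_ι_mul a b x _ ih =>
      rw [← mul_assoc, ← hc, mul_assoc, ih, mul_neg, mul_assoc (_ * _)]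
  | add x y _ _ hx hy => rw [add_mul, mul_add, hx, hy, neg_add]
  | ι_mul_ι_mul a b x _ ih =>
    rw [mul_assoc, ih, mul_neg, ← mul_assoc, hc, mul_assoc]

theorem ext_oddPart {K V : Type*} [CommRing K] [Algebra ℚ K] [AddCommGroup V] [Module K V]
    [Module ℚ V] [IsScalarTower ℚ K V] :
    OddPart (Λ := ExteriorAlgebra K V)
      ((CliffordAlgebra.evenOdd (0 : QuadraticForm K V) 1).restrictScalars ℚ) where
  central x hx y hy := by
    rw [Subalgebra.mem_center_iff]
    intro b
    refine (ext_even_central _ ?_ b).symm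
    exact SetLike.mul_mem_graded (A := CliffordAlgebra.evenOdd (0 : QuadraticForm K V))
      (i := 1) (j := 1) hx hy
  anti x hx y hy := ext_odd_anti x hx y hy
  triple x hx y hy z hz :=
    SetLike.mul_mem_graded (A := CliffordAlgebra.evenOdd (0 : QuadraticForm K V))
      (i := 0) (j := 1) (SetLike.mul_mem_graded (A := CliffordAlgebra.evenOdd (0 : QuadraticForm K V))
      (i := 1) (j := 1) hx hy) hz

/-- Generic element `∑ ξ_k x_k`. -/
noncomputable def genMat {K : Type*} [CommRing K] {t : ℕ} {p q : Type*}
    (x : Fin t → Matrix p q K) : Matrix p q (ExteriorAlgebra K (Fin t → K)) :=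
  Matrix.of fun i j => ExteriorAlgebra.ι K (fun k => x k i j)

theorem prod_scalar_aux {K Λ : Type*} [CommRing K] [Ring Λ] [Algebra K Λ] {n : Type*} [Fintype n]
    [DecidableEq n] (l : List (Matrix n n K × Λ)) :
    (l.map fun z => (algebraMap K Λ).mapMatrix z.1 * Matrix.scalar n z.2).prod =
      (algebraMap K Λ).mapMatrix (l.map Prod.fst).prod *
        Matrix.scalar n (l.map Prod.snd).prod := by
  induction l with
  | nil => simp
  | cons z l ih =>
    simp only [List.map_cons, List.prod_cons, ih, map_mul]
    have : ∀ (N : Matrix n n K) (s : Λ), Matrix.scalar n s * (algebraMap K Λ).mapMatrix N =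
        (algebraMap K Λ).mapMatrix N * Matrix.scalar n s := by
      intro N s
      ext i j
      simp [Algebra.commutes]
    rw [mul_assoc, ← mul_assoc (Matrix.scalar n z.2), this]
    simp only [mul_assoc]

theorem genMat_pow {K : Type*} [CommRing K] {t : ℕ} {n : Type*} [Fintype n] [DecidableEq n]
    (x : Fin t → Matrix n n K) :
    genMat x ^ t = (algebraMap K _).mapMatrix (stdPoly t x) *
      Matrix.scalar n (ExteriorAlgebra.ιMulti K t (fun i => Pi.single i (1 : K))) := by
  have h1 : genMat x = ∑ k, (algebraMap K (ExteriorAlgebra K (Fin t → K))).mapMatrix (x k) *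
      Matrix.scalar n (ExteriorAlgebra.ι K (Pi.single k (1 : K))) := by
    ext i j
    rw [Matrix.sum_apply]
    simp only [genMat, Matrix.of_apply, RingHom.mapMatrix_apply, Matrix.scalar_apply,
      Matrix.mul_diagonal, Matrix.map_apply, ← Algebra.smul_def]
    simp_rw [← map_smul, ← map_sum]
    congr 1
    ext k
    simp [Finset.sum_apply, Pi.single_apply]
  have h2 : genMat x ^ t = MultilinearMap.mkPiAlgebraFin K t
      (Matrix n n (ExteriorAlgebra K (Fin t → K))) (fun _ => genMat x) := by
    simp
  have h3 : ∀ r : Fin t → Fin t, (List.ofFn fun i =>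
      (algebraMap K (ExteriorAlgebra K (Fin t → K))).mapMatrix (x (r i)) *
      Matrix.scalar n (ExteriorAlgebra.ι K (Pi.single (r i) (1 : K)))).prod =
      (algebraMap K _).mapMatrix (List.ofFn fun i => x (r i)).prod *
      Matrix.scalar n (ExteriorAlgebra.ιMulti K t (fun i => Pi.single (r i) (1 : K))) := by
    intro r
    have := prod_scalar_aux (n := n) (List.ofFn fun i => (x (r i),
      ExteriorAlgebra.ι K (Pi.single (r i) (1 : K) : Fin t → K)))
    rw [List.map_ofFn, List.map_ofFn, List.map_ofFn] at this
    rw [ExteriorAlgebra.ιMulti_apply]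
    exact this
  rw [h2, h1, MultilinearMap.map_sum]
  simp only [MultilinearMap.mkPiAlgebraFin_apply, h3]
  rw [stdPoly, map_sum, Finset.sum_mul]
  have h4 : ∀ r : Fin t → Fin t, r ∉ Set.range (fun σ : Equiv.Perm (Fin t) => (σ : Fin t → Fin t)) →
      (algebraMap K (ExteriorAlgebra K (Fin t → K))).mapMatrix (List.ofFn fun i => x (r i)).prod *
      Matrix.scalar n (ExteriorAlgebra.ιMulti K t (fun i => Pi.single (r i) (1 : K))) = 0 := by
    intro r hr
    have : ¬ Function.Injective r := by
      intro hi
      exact hr ⟨Equiv.ofBijective r (Finite.injective_iff_bijective.1 hi), rfl⟩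
    rw [AlternatingMap.map_eq_zero_of_not_injective, map_zero, mul_zero]
    intro hi
    apply this
    intro a b hab
    apply hi
    simp only [hab]
  symm
  apply Fintype.sum_of_injective (fun σ : Equiv.Perm (Fin t) => (σ : Fin t → Fin t))
    DFunLike.coe_injective _ _ h4
  intro σ
  have := AlternatingMap.map_perm (ExteriorAlgebra.ιMulti K t)
    (fun i : Fin t => (Pi.single i (1 : K) : Fin t → K)) σ
  have e : (fun i => (Pi.single (σ i) (1 : K) : Fin t → K)) =
    (fun i : Fin t => (Pi.single i (1 : K) : Fin t → K)) ∘ σ := rfl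
  rw [e, this, Units.smul_def, map_zsmul, map_zsmul, smul_mul_assoc, mul_smul_comm]

theorem ιMulti_smul_eq_zero {K : Type*} [CommRing K] {t : ℕ} (c : K)
    (h : algebraMap K (ExteriorAlgebra K (Fin t → K)) c *
      (ExteriorAlgebra.ιMulti K t (fun i => Pi.single i (1 : K))) = 0) : c = 0 := by
  have := congrArg (ExteriorAlgebra.liftAlternating (R := K) (M := Fin t → K) (N := K)
    (fun i => if hi : t = i then hi ▸ Matrix.detRowAlternating else 0)) h
  rw [← Algebra.smul_def, map_smul, map_zero, ExteriorAlgebra.liftAlternating_apply_ιMulti] at this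
  have h1 : Matrix.detRowAlternating (fun i : Fin t => (Pi.single i (1 : K) : Fin t → K)) = 1 := by
    have : (fun i : Fin t => (Pi.single i (1 : K) : Fin t → K)) =
      (1 : Matrix (Fin t) (Fin t) K) := by
      ext i j; simp [Matrix.one_apply, Pi.single_apply, eq_comm]
    rw [this]; exact Matrix.det_one
  simpa [h1] using this

theorem ur_char_zero {K : Type*} [CommRing K] [Algebra ℚ K] (ℓ m : ℕ)
    (a : Fin (2 * (ℓ + m)) → Matrix (Fin ℓ) (Fin ℓ) K)
    (b : Fin (2 * (ℓ + m)) → Matrix (Fin ℓ) (Fin m) K)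
    (e : Fin (2 * (ℓ + m)) → Matrix (Fin m) (Fin m) K)
    (d : Fin (2 * (ℓ + m)) → Matrix (Fin m) (Fin ℓ) K) (i j : Fin ℓ) :
    stdPoly (2 * (ℓ + m)) (fun k => Matrix.fromBlocks (a k) (Matrix.fromCols (b k) 0) 0
      (Matrix.fromBlocks (e k) (d k) 0 (a k))) (Sum.inl i) (Sum.inr (Sum.inr j)) = 0 := by
  have hodd : ∀ {p q : Type} (x : Fin (2 * (ℓ + m)) → Matrix p q K),
      OddMat ((CliffordAlgebra.evenOdd
        (0 : QuadraticForm K (Fin (2 * (ℓ + m)) → K)) 1).restrictScalars ℚ) (genMat x) :=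
    fun x i j => CliffordAlgebra.ι_mem_evenOdd_one _ _
  have h := ur_super ext_oddPart (hodd a) (hodd b) (hodd e) (hodd d) i j
  have hg : Matrix.fromBlocks (genMat a) (Matrix.fromCols (genMat b) 0) 0
      (Matrix.fromBlocks (genMat e) (genMat d) 0 (genMat a)) =
      genMat (fun k => Matrix.fromBlocks (a k) (Matrix.fromCols (b k) 0) 0
      (Matrix.fromBlocks (e k) (d k) 0 (a k))) := by
    have hz : (0 : ExteriorAlgebra K (Fin (2 * (ℓ + m)) → K)) =
      ExteriorAlgebra.ι K (fun _ => (0 : K)) := (map_zero (ExteriorAlgebra.ι K)).symm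
    ext (u | u | u) (v | v | v) <;> first | rfl | exact hz
  rw [hg, Fintype.card_fin, Fintype.card_fin, genMat_pow] at h
  apply ιMulti_smul_eq_zero (t := 2 * (ℓ + m))
  simpa [Matrix.mul_diagonal] using h

end Ext

/-- Index type of the variables of the generic block matrices. -/
abbrev GenVar (ℓ m : ℕ) : Type :=
  Fin (2 * (ℓ + m)) × (Fin ℓ ⊕ (Fin m ⊕ Fin ℓ)) × (Fin ℓ ⊕ (Fin m ⊕ Fin ℓ))

/-- Generic block matrices. -/
noncomputable def genBlock (R : Type*) [CommRing R] (ℓ m : ℕ) (k : Fin (2 * (ℓ + m))) :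
    Matrix (Fin ℓ ⊕ (Fin m ⊕ Fin ℓ)) (Fin ℓ ⊕ (Fin m ⊕ Fin ℓ)) (MvPolynomial (GenVar ℓ m) R) :=
  Matrix.fromBlocks (Matrix.of fun i j => MvPolynomial.X (k, Sum.inl i, Sum.inl j))
    (Matrix.fromCols (Matrix.of fun i j => MvPolynomial.X (k, Sum.inl i, Sum.inr (Sum.inl j))) 0) 0
    (Matrix.fromBlocks
      (Matrix.of fun i j => MvPolynomial.X (k, Sum.inr (Sum.inl i), Sum.inr (Sum.inl j)))
      (Matrix.of fun i j => MvPolynomial.X (k, Sum.inr (Sum.inl i), Sum.inr (Sum.inr j))) 0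
      (Matrix.of fun i j => MvPolynomial.X (k, Sum.inl i, Sum.inl j)))

theorem stdPoly_map {R S : Type*} [Ring R] [Ring S] (f : R →+* S) (d : ℕ) (x : Fin d → R) :
    f (stdPoly d x) = stdPoly d (fun k => f (x k)) := by
  simp only [stdPoly, map_sum, map_zsmul, map_list_prod, List.map_ofFn]
  rfl

/-- For matrices of block form `[[a_k,b_k,0],[0,e_k,d_k],[0,0,a_k]]`, the upper-right
`ℓ×ℓ` block of `s_{2(ℓ+m)}(M₁,…,M_t)` vanishes. -/
theorem ur_std_zero (F : Type*) [Field F] (ℓ m : ℕ) (hℓ : 0 < ℓ) (hm : 0 < m)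
    (x : Fin (2 * (ℓ + m)) →
      Matrix (Fin ℓ ⊕ (Fin m ⊕ Fin ℓ)) (Fin ℓ ⊕ (Fin m ⊕ Fin ℓ)) F)
    (hx : ∀ k, memA (x k))
    (hur : ∀ k (i j : Fin ℓ), x k (Sum.inl i) (Sum.inr (Sum.inr j)) = 0) :
    ∀ i j : Fin ℓ,
      stdPoly (2 * (ℓ + m)) x (Sum.inl i) (Sum.inr (Sum.inr j)) = 0 := by
  intro i j
  have hQ : stdPoly (2 * (ℓ + m)) (genBlock ℚ ℓ m) (Sum.inl i) (Sum.inr (Sum.inr j)) = 0 :=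
    ur_char_zero ℓ m _ _ _ _ i j
  let ψ : MvPolynomial (GenVar ℓ m) ℤ →+* MvPolynomial (GenVar ℓ m) ℚ :=
    MvPolynomial.map (Int.castRingHom ℚ)
  have hψ : Function.Injective ψ :=
    MvPolynomial.map_injective _ (RingHom.injective_int _)
  have hψg : ∀ k, ψ.mapMatrix (genBlock ℤ ℓ m k) = genBlock ℚ ℓ m k := by
    intro k
    ext1 u v
    rcases u with u | u | u <;> rcases v with v | v | v <;> simp [genBlock, ψ]
  have hZ : stdPoly (2 * (ℓ + m)) (genBlock ℤ ℓ m) (Sum.inl i) (Sum.inr (Sum.inr j)) = 0 := by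
    apply hψ
    rw [map_zero, ← hQ, ← funext hψg, ← stdPoly_map]
    rfl
  let φ : MvPolynomial (GenVar ℓ m) ℤ →+* F :=
    MvPolynomial.eval₂Hom (Int.castRingHom F) (fun v => x v.1 v.2.1 v.2.2)
  have hφg : ∀ k, φ.mapMatrix (genBlock ℤ ℓ m k) = x k := by
    intro k
    obtain ⟨h1, h2, h3, h4⟩ := hx k
    ext1 u v
    rcases u with u | u | u <;> rcases v with v | v | v <;>
      simp [genBlock, φ, h1, h2, h3, h4, hur]
  rw [← funext hφg, ← stdPoly_map, RingHom.mapMatrix_apply, Matrix.map_apply, hZ, map_zero]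
end

section
/- Let A be a simple F-subalgebra of M_n(F). If A is a proper subalgebra, then A satisfies the standard identity s_{2n-2}. Equivalently: any simple subalgebra of M_n(F) not satisfying s_{2n-2} equals M_n(F). -/
open Matrix

section
open Polynomial

theorem AL_derivative_charpoly {R : Type*} [CommRing R] {n : ℕ} (Y : Matrix (Fin n) (Fin n) R) :
    derivative Y.charpoly = (adjugate Y.charmatrix).trace := by
  rw [Matrix.charpoly, Matrix.trace, Matrix.det_apply]
  simp only [Matrix.diag_apply, adjugate_apply, derivative_sum, derivative_smul, Units.smul_def]
  simp_rw [Matrix.det_apply, Units.smul_def, derivative_prod_finset]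
  rw [Finset.sum_comm]
  refine Finset.sum_congr rfl fun σ _ => ?_
  rw [← Finset.smul_sum]
  congr 1
  refine Eq.trans ?_ (Equiv.sum_comp σ _)
  refine Finset.sum_congr rfl fun i _ => ?_
  rw [← Finset.mul_prod_erase _ _ (Finset.mem_univ i), mul_comm]
  congr 1
  · simp only [updateRow_self]
    by_cases h : σ i = i
    · rw [h, charmatrix_apply_eq]; simp
    · rw [charmatrix_apply_ne _ _ _ h]; simp [Ne.symm h]
  · refine Finset.prod_congr rfl fun j hj => ?_
    rw [updateRow_ne]
    simpa using (Finset.mem_erase.1 hj).1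

theorem AL_nilp {R : Type*} [CommRing R] [Algebra ℚ R] {n : ℕ} (Y : Matrix (Fin n) (Fin n) R)
    (h : ∀ k, (Y ^ (k+1)).trace = 0) : Y ^ n = 0 := by
  nontriviality R
  set b := matPolyEquiv (adjugate Y.charmatrix) with hb
  have hB : (X - C Y) * b = matPolyEquiv (Y.charpoly • (1 : Matrix (Fin n) (Fin n) R[X])) := by
    rw [← matPolyEquiv_charmatrix, hb, ← map_mul, mul_adjugate, charpoly]
  have hcoeff : ∀ k, (matPolyEquiv (Y.charpoly • (1 : Matrix (Fin n) (Fin n) R[X]))).coeff k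
      = Y.charpoly.coeff k • 1 := by
    intro k
    rw [matPolyEquiv_smul_one, coeff_map]
    rw [Algebra.algebraMap_eq_smul_one]
  have hrec : ∀ k, b.coeff k = Y * b.coeff (k+1) + Y.charpoly.coeff (k+1) • 1 := by
    intro k
    have := congrArg (fun p => p.coeff (k+1)) hB
    simp only [hcoeff, sub_mul, coeff_sub, coeff_X_mul, coeff_C_mul] at this
    rw [← this]; abel
  have h0 : - (Y * b.coeff 0) = Y.charpoly.coeff 0 • 1 := by
    have := congrArg (fun p => p.coeff 0) hB
    simpa only [hcoeff, sub_mul, coeff_sub, coeff_X_mul_zero, coeff_C_mul, zero_sub] using this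
  have hpoly : ∀ k, ∃ q : R[X], b.coeff k = aeval Y q := by
    have : ∀ j k, b.natDegree < k + j → ∃ q : R[X], b.coeff k = aeval Y q := by
      intro j
      induction j with
      | zero => intro k hk; exact ⟨0, by simp [coeff_eq_zero_of_natDegree_lt (by simpa using hk)]⟩
      | succ j ih =>
        intro k hk
        obtain ⟨q, hq⟩ := ih (k+1) (by omega)
        refine ⟨X * q + C (Y.charpoly.coeff (k+1)), ?_⟩
        rw [hrec, hq]
        simp [Algebra.algebraMap_eq_smul_one]
    intro k
    exact this (b.natDegree + 1) k (by omega)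
  have htr : ∀ k, (Y * b.coeff k).trace = 0 := by
    intro k
    obtain ⟨q, hq⟩ := hpoly k
    rw [hq, aeval_eq_sum_range, Finset.mul_sum, trace_sum]
    refine Finset.sum_eq_zero fun i _ => ?_
    rw [mul_smul_comm, trace_smul, ← pow_succ', h, smul_zero]
  have htrb : ∀ k, (b.coeff k).trace = Y.charpoly.coeff (k+1) * (k+1) := by
    intro k
    rw [← coeff_derivative, AL_derivative_charpoly, trace, trace]
    simp [hb, matPolyEquiv_coeff_apply]
  have hz : ∀ k, k ≠ n → Y.charpoly.coeff k = 0 := by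
    have key : ∀ (z : ℚ) (c : R), z ≠ 0 → algebraMap ℚ R z * c = 0 → c = 0 := by
      intro z c hz hc
      have : algebraMap ℚ R z⁻¹ * (algebraMap ℚ R z * c) = c := by
        rw [← mul_assoc, ← map_mul, inv_mul_cancel₀ hz]; simp
      rw [← this, hc, mul_zero]
    intro k hk
    cases k with
    | zero =>
      have := congrArg trace h0
      rw [trace_neg, htr, trace_smul] at this
      apply key n _ (by exact_mod_cast Ne.symm hk)
      simp at this
      simp [this, mul_comm]
    | succ k =>
      have := congrArg trace (hrec k)
      rw [trace_add, htr, trace_smul, htrb] at this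
      apply key ((k:ℚ) + 1 - n) _ (by rw [sub_ne_zero]; exact_mod_cast hk)
      simp at this
      simp only [map_sub, map_add, map_natCast, map_one]
      linear_combination this
  have hd := charpoly_natDegree_eq_dim Y
  have hm := charpoly_monic Y
  have hc := aeval_self_charpoly Y
  rw [aeval_eq_sum_range, hd, Fintype.card_fin, Finset.sum_range_succ, Finset.sum_eq_zero] at hc
  · have : Y.charpoly.coeff n = 1 := by
      have := hm.coeff_natDegree
      rwa [hd, Fintype.card_fin] at this
    simpa [this] using hc
  · intro i hi
    rw [hz i (by simp at hi; omega), zero_smul]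

end

theorem AL_anti {M : Type*} [AddCommGroup M] [Module ℚ M] (x y : M) :
    ExteriorAlgebra.ι ℚ x * ExteriorAlgebra.ι ℚ y = - (ExteriorAlgebra.ι ℚ y * ExteriorAlgebra.ι ℚ x) :=
  eq_neg_of_add_eq_zero_left (ExteriorAlgebra.ι_add_mul_swap x y)

theorem AL_central {M : Type*} [AddCommGroup M] [Module ℚ M] (x y : M) :
    ExteriorAlgebra.ι ℚ x * ExteriorAlgebra.ι ℚ y ∈
      Subalgebra.center ℚ (ExteriorAlgebra ℚ M) := by
  rw [Subalgebra.mem_center_iff]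
  intro b
  induction b using ExteriorAlgebra.induction with
  | algebraMap r => exact Algebra.commutes _ _
  | ι z =>
    rw [← mul_assoc, AL_anti z x, neg_mul, mul_assoc, AL_anti z y, mul_neg, neg_neg, mul_assoc]
  | mul a b ha hb => rw [mul_assoc, hb, ← mul_assoc, ha, mul_assoc]
  | add a b ha hb => rw [add_mul, mul_add, ha, hb]

theorem AL_ext_nilp {M : Type*} [AddCommGroup M] [Module ℚ M] {n : ℕ}
    (v : Fin n → Fin n → M) (Z : Matrix (Fin n) (Fin n) (ExteriorAlgebra ℚ M))
    (hZ : Z = Matrix.of fun i j => ExteriorAlgebra.ι ℚ (v i j)) : Z ^ (2 * n) = 0 := by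
  let S := Subalgebra.center ℚ (ExteriorAlgebra ℚ M)
  have hent : ∀ i j, Z i j = ExteriorAlgebra.ι ℚ (v i j) := by intro i j; rw [hZ]; rfl
  have hmem : ∀ i j, (Z * Z) i j ∈ S := by
    intro i j
    rw [Matrix.mul_apply]
    refine Subalgebra.sum_mem _ fun k _ => ?_
    rw [hent, hent]; exact AL_central _ _
  let Y : Matrix (Fin n) (Fin n) S := Matrix.of fun i j => ⟨(Z * Z) i j, hmem i j⟩
  have hY : S.val.mapMatrix Y = Z ^ 2 := by
    ext i j
    rw [pow_two]; rfl
  have hYk : ∀ k, S.val.mapMatrix (Y ^ k) = Z ^ (2 * k) := by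
    intro k
    rw [map_pow, hY, pow_mul]
  have hYn : Y ^ n = 0 := by
    apply AL_nilp
    intro k
    apply Subtype.val_injective
    have e1 : (((Y ^ (k+1)).trace : S) : ExteriorAlgebra ℚ M) = (Z * Z * Z ^ (2 * k)).trace := by
      rw [← pow_two, ← pow_add, show 2 + 2 * k = 2 * (k+1) by ring, ← hYk]
      exact AddMonoidHom.map_trace (S.val : S →+ ExteriorAlgebra ℚ M) _
    have hc : ∀ i j b, b * (Z ^ (2 * k)) i j = (Z ^ (2 * k)) i j * b := by
      intro i j b
      rw [← hYk]
      exact Subalgebra.mem_center_iff.1 ((Y ^ k) i j).2 b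
    have e2 : (Z * Z * Z ^ (2 * k)).trace = - (Z * Z ^ (2 * k) * Z).trace := by
      rw [mul_assoc]
      simp only [Matrix.trace, Matrix.diag_apply]
      simp only [Matrix.mul_apply, Finset.mul_sum, Finset.sum_mul, ← Finset.sum_neg_distrib]
      rw [Finset.sum_comm]
      refine Finset.sum_congr rfl fun j _ => Finset.sum_congr rfl fun i _ =>
        Finset.sum_congr rfl fun l _ => ?_
      rw [mul_assoc, ← hc, hent i j, hent j l, ← mul_assoc, ← mul_assoc, AL_anti, neg_mul]
    have e3 : Z * Z ^ (2 * k) * Z = Z * Z * Z ^ (2 * k) := by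
      rw [mul_assoc, mul_assoc, ← pow_succ, pow_succ']
    rw [e3] at e2
    rw [e1, ZeroMemClass.coe_zero]
    have : IsAddTorsionFree (ExteriorAlgebra ℚ M) := .of_module_rat _
    exact self_eq_neg.1 e2
  have := hYk n
  rw [hYn, map_zero] at this
  exact this.symm

theorem AL_prod_map {L : Type*} [Ring L] [Algebra ℚ L] {n : ℕ} (m : ℕ)
    (y : Fin m → Matrix (Fin n) (Fin n) ℚ) (w : Fin m → L) :
    (List.ofFn fun i => (y i).map (· • w i)).prod =
      ((List.ofFn y).prod).map (· • (List.ofFn w).prod) := by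
  induction m with
  | zero =>
    ext i j
    simp [Matrix.one_apply]
  | succ m ih =>
    rw [List.ofFn_succ, List.prod_cons, ih, List.ofFn_succ, List.prod_cons, List.ofFn_succ,
      List.prod_cons]
    ext i j
    simp [Matrix.mul_apply, Finset.sum_smul, smul_smul, mul_comm]

theorem AL_rat {n d : ℕ} (hd : 2 * n ≤ d) (x : Fin d → Matrix (Fin n) (Fin n) ℚ) :
    stdPoly d x = 0 := by
  let e : Fin d → (Fin d → ℚ) := fun k => Pi.single k 1
  let Z : Matrix (Fin n) (Fin n) (ExteriorAlgebra ℚ (Fin d → ℚ)) :=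
    Matrix.of fun i j => ExteriorAlgebra.ι ℚ (fun k => x k i j)
  have hZ0 : Z ^ d = 0 := by
    have := AL_ext_nilp (fun i j k => x k i j) Z rfl
    exact pow_eq_zero_of_le hd this
  have hZ : Z = ∑ k, (x k).map (· • ExteriorAlgebra.ι ℚ (e k)) := by
    ext i j
    simp only [Matrix.sum_apply, Matrix.map_apply, Z, Matrix.of_apply, ← map_smul]
    rw [← map_sum]
    congr 1
    ext k
    simp [e, Finset.sum_apply, Pi.single_apply]
  have hexp : Z ^ d = ∑ r : Fin d → Fin d, ((List.ofFn fun i => x (r i)).prod).map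
      (· • ExteriorAlgebra.ιMulti ℚ d (fun i => e (r i))) := by
    rw [← MultilinearMap.mkPiAlgebraFin_apply_const (R := ℚ), hZ, MultilinearMap.map_sum]
    refine Finset.sum_congr rfl fun r _ => ?_
    rw [MultilinearMap.mkPiAlgebraFin_apply, AL_prod_map, ExteriorAlgebra.ιMulti_apply]
  let D : (Fin d → ℚ) [⋀^Fin d]→ₗ[ℚ] ℚ := Matrix.detRowAlternating
  have hDe : D e = 1 := by
    have : e = (1 : Matrix (Fin d) (Fin d) ℚ) := by
      ext i j; simp [e, Matrix.one_apply, Pi.single_apply, eq_comm]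
    rw [this]; exact Matrix.det_one
  let f : ∀ i, (Fin d → ℚ) [⋀^Fin i]→ₗ[ℚ] ℚ := Pi.single d D
  let L := ExteriorAlgebra.liftAlternating f
  have hL : ∀ v, L (ExteriorAlgebra.ιMulti ℚ d v) = D v := by
    intro v
    simp only [L, ExteriorAlgebra.liftAlternating_apply_ιMulti, f, Pi.single_eq_same]
  ext i j
  have h1 : ∑ r : Fin d → Fin d, ((List.ofFn fun i => x (r i)).prod) i j * D (fun i => e (r i))
      = 0 := by
    have := congrArg (fun W : Matrix (Fin n) (Fin n) _ => L (W i j)) (hexp.symm.trans hZ0)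
    simpa [Matrix.sum_apply, hL] using this
  rw [stdPoly, Matrix.sum_apply, Matrix.zero_apply, ← h1]
  refine Finset.sum_of_injOn (fun σ : Equiv.Perm (Fin d) => (σ : Fin d → Fin d)) ?_ ?_ ?_ ?_
  · intro a _ b _ hab; exact DFunLike.coe_injective hab
  · intro a _; simp
  · intro r _ hr
    have : ¬ Function.Injective r := by
      intro hi
      apply hr
      exact ⟨Equiv.ofBijective r (Finite.injective_iff_bijective.1 hi), by simp, rfl⟩
    rw [D.map_eq_zero_of_not_injective, mul_zero]
    intro h
    exact this fun a b hab => h (by simp [hab])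
  · intro σ _
    have := D.map_perm e σ
    rw [hDe] at this
    change _ = _ * D (e ∘ σ)
    rw [this]
    simp [Units.smul_def, mul_comm]

theorem AL_map {R S : Type*} [Ring R] [Ring S] (f : R →+* S) (d : ℕ) (x : Fin d → R) :
    f (stdPoly d x) = stdPoly d (fun i => f (x i)) := by
  simp only [stdPoly, map_sum, map_zsmul, map_list_prod, List.map_ofFn]
  rfl

theorem AL {K : Type*} [Field K] {n d : ℕ} (hd : 2 * n ≤ d) (x : Fin d → Matrix (Fin n) (Fin n) K) :
    stdPoly d x = 0 := by
  let f := MultilinearMap.mkPiAlgebraFin K d (Matrix (Fin n) (Fin n) K)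
  have hf : ∀ x, stdPoly d x = (∑ σ : Equiv.Perm (Fin d), Equiv.Perm.sign σ • f.domDomCongr σ) x := by
    intro x
    rw [← MultilinearMap.alternatization_coe]
    change _ = MultilinearMap.alternatization f x
    rw [MultilinearMap.alternatization_apply]
    rfl
  have hz : (∑ σ : Equiv.Perm (Fin d), Equiv.Perm.sign σ • f.domDomCongr σ) = 0 := by
    refine Module.Basis.ext_multilinear (fun _ => Matrix.stdBasis K (Fin n) (Fin n)) fun v => ?_
    rw [← hf]
    let y : Fin d → Matrix (Fin n) (Fin n) ℤ := fun i => Matrix.single (v i).1 (v i).2 1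
    have hy : stdPoly d y = 0 := by
      have h := AL_map (Int.castRingHom ℚ).mapMatrix d y
      rw [AL_rat hd] at h
      ext i j
      have := congrFun (congrFun h i) j
      simpa using this
    have h := AL_map (Int.castRingHom K).mapMatrix d y
    rw [hy, map_zero] at h
    change _ = 0
    convert h.symm using 2
    ext k : 1
    change _ = (Matrix.single (v k).1 (v k).2 1).map (Int.castRingHom K)
    rw [Matrix.map_single, map_one, ← Matrix.stdBasis_eq_single]
  rw [hf, hz]; rfl

theorem AL_burnside {K V : Type*} [Field K] [IsAlgClosed K] [AddCommGroup V] [Module K V]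
    [FiniteDimensional K V] (B : Subalgebra K (Module.End K V)) [IsSimpleModule B V] : B = ⊤ := by
  classical
  rw [eq_top_iff]
  intro g _
  have hS := (IsSimpleModule.algebraMap_end_bijective_of_isAlgClosed (A := B) (V := V) K).2
  let g' : Module.End (Module.End B V) V :=
    { toFun := g
      map_add' := map_add g
      map_smul' := by
        intro c v
        obtain ⟨a, rfl⟩ := hS c
        exact map_smul g a v }
  let b := Module.finBasis K V
  obtain ⟨r, hr⟩ := jacobson_density (R := B) g' (Finset.univ.image b)
  have : g = (r : Module.End K V) := by
    refine b.ext fun i => ?_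
    exact hr (b i) (by simp)
  rw [this]; exact r.2

theorem AL_span {F K : Type*} [Field F] [Field K] [Algebra F K] {n : ℕ}
    (A : Submodule F (Matrix (Fin n) (Fin n) F)) (hA : A ≠ ⊤) :
    Submodule.span K ((fun M : Matrix (Fin n) (Fin n) F => M.map (algebraMap F K)) '' A) ≠ ⊤ := by
  obtain ⟨f, hf, hfA⟩ := Submodule.exists_le_ker_of_lt_top A (lt_top_iff_ne_top.2 hA)
  let b := Matrix.stdBasis F (Fin n) (Fin n)
  let b' := Matrix.stdBasis K (Fin n) (Fin n)
  let f' : Matrix (Fin n) (Fin n) K →ₗ[K] K := b'.constr K (fun p => algebraMap F K (f (b p)))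
  have hbb : ∀ p, b' p = (b p).map (algebraMap F K) := by
    rintro ⟨i, j⟩
    simp only [b, b']
    rw [Matrix.stdBasis_eq_single, Matrix.stdBasis_eq_single, Matrix.map_single, map_one]
  have hff : ∀ M : Matrix (Fin n) (Fin n) F, f' (M.map (algebraMap F K)) = algebraMap F K (f M) := by
    intro M
    have : M.map (algebraMap F K) = ∑ p, algebraMap F K (b.repr M p) • b' p := by
      conv_lhs => rw [← b.sum_repr M]
      ext i j
      simp only [Matrix.sum_apply, Matrix.map_apply, Matrix.smul_apply, hbb, map_sum, map_mul, smul_eq_mul]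
    rw [this]
    conv_rhs => rw [← b.sum_repr M]
    simp only [map_sum, map_smul, f', Module.Basis.constr_basis, smul_eq_mul, map_mul]
  intro htop
  apply hf
  have h0 : f' = 0 := by
    apply LinearMap.ext_on htop
    rintro _ ⟨M, hM, rfl⟩
    have : f M = 0 := hfA hM
    simp [hff, this]
  refine b.ext fun p => ?_
  have := hff (b p)
  rw [h0] at this
  simpa using this.symm

/-- A proper simple `F`-subalgebra of `M_n(F)` satisfies the standard identity `s_{2n-2}`. -/
theorem simple_proper_subalgebra_satisfies (F : Type*) [Field F] (n : ℕ) (hn : 2 ≤ n)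
    (A : Subalgebra F (Matrix (Fin n) (Fin n) F)) [IsSimpleRing A] (hA : A ≠ ⊤) :
    ∀ x : Fin (2 * n - 2) → Matrix (Fin n) (Fin n) F,
      (∀ k, x k ∈ A) → stdPoly (2 * n - 2) x = 0 := by
  intro x hx
  let K := AlgebraicClosure F
  let V := Fin n → K
  let φ : Matrix (Fin n) (Fin n) F →+* Matrix (Fin n) (Fin n) K := (algebraMap F K).mapMatrix
  let T : Submonoid (Matrix (Fin n) (Fin n) K) := A.toSubmonoid.map (φ : _ →* _)
  let B₀ : Subalgebra K (Matrix (Fin n) (Fin n) K) := Algebra.adjoin K (T : Set _)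
  have hB₀ : B₀ ≠ ⊤ := by
    intro h
    have h1 : Subalgebra.toSubmodule B₀ = ⊤ := by rw [h]; rfl
    rw [Algebra.adjoin_eq_span, Submonoid.closure_eq] at h1
    refine AL_span (F := F) (K := K) (Subalgebra.toSubmodule A) ?_ h1
    intro h2
    exact hA (Algebra.toSubmodule_eq_top.1 h2)
  let ψ : Matrix (Fin n) (Fin n) K ≃ₐ[K] Module.End K V := Matrix.toLinAlgEquiv'
  let B : Subalgebra K (Module.End K V) := B₀.map (ψ : _ →ₐ[K] _)
  have hB : B ≠ ⊤ := by
    intro h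
    apply hB₀
    rw [eq_top_iff]
    intro M _
    have : ψ M ∈ B := by rw [h]; trivial
    obtain ⟨M', hM', h2⟩ := this
    have : M' = M := ψ.injective h2
    rwa [← this]
  have hns : ¬ IsSimpleModule B V := fun h => hB (AL_burnside B)
  have : Nonempty (Fin n) := ⟨⟨0, by omega⟩⟩
  have hW : ∃ W : Submodule B V, W ≠ ⊥ ∧ W ≠ ⊤ := by
    by_contra hcon
    push Not at hcon
    apply hns
    have : IsSimpleOrder (Submodule B V) := ⟨fun W => or_iff_not_imp_left.2 (hcon W)⟩
    exact ⟨⟩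
  obtain ⟨W, hW0, hW1⟩ := hW
  let W' : Submodule K V := W.restrictScalars K
  have hlt : Module.finrank K W' < n := by
    have := Submodule.finrank_lt (s := W') (by
      intro h; apply hW1
      exact (Submodule.restrictScalars_eq_top_iff K B V).1 h)
    simpa [V] using this
  have hWnt : Nontrivial W := Submodule.nontrivial_iff_ne_bot.2 hW0
  let b := Module.finBasis K W'
  let α : A →+* B :=
    ((ψ : _ →+* Module.End K V).comp (φ.comp A.val.toRingHom)).codRestrict B (by
      intro a
      exact ⟨φ a, Algebra.subset_adjoin ⟨a, a.2, rfl⟩, rfl⟩)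
  let ρ : A →+* Module.End K W' := (Module.toModuleEnd K (S := B) W).comp α
  let ρ' : A →+* Matrix _ _ K := (LinearMap.toMatrixAlgEquiv b).toRingEquiv.toRingHom.comp ρ
  have hnt : Nontrivial W' := hWnt
  have : Nontrivial (Module.End K W') := inferInstance
  have : Nontrivial (Matrix (Fin (Module.finrank K W')) (Fin (Module.finrank K W')) K) :=
    (LinearMap.toMatrixAlgEquiv b).symm.surjective.nontrivial
  have hinj : Function.Injective ρ' := RingHom.injective ρ'
  let y : Fin (2 * n - 2) → A := fun k => ⟨x k, hx k⟩
  have hy : stdPoly (2 * n - 2) y = 0 := by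
    apply hinj
    rw [AL_map, map_zero]
    exact AL (by omega) _
  have := AL_map A.val.toRingHom _ y
  rw [hy, map_zero] at this
  exact this.symm
end

section
/- Let Λ be a subalgebra of the full block upper triangular algebra E_{(ℓ_1,...,ℓ_t)}(F) such that for some index i the image Λ_{i(i+1)} of Λ in E_{(ℓ_i, ℓ_{i+1})}(F) is contained in the semisimple part M_{ℓ_i}(F) × M_{ℓ_{i+1}}(F) (i.e., Λ is not uniserial at i). Then Λ satisfies the standard identity s_{2n-2}, where n = ℓ_1 + ... + ℓ_t. -/
open Matrix

/-- `cum ℓ k` is `ℓ 0 + ⋯ + ℓ (k-1)`, the index where the `k`-th block starts. -/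
def cum {t : ℕ} (ℓ : Fin t → ℕ) (k : ℕ) : ℕ :=
  ∑ i : Fin t, if (i : ℕ) < k then ℓ i else 0

/-- Block upper triangular with respect to the block sizes `ℓ`. -/
def BlockUT {F : Type*} [Field F] {t n : ℕ} (ℓ : Fin t → ℕ) (M : Matrix (Fin n) (Fin n) F) :
    Prop :=
  ∀ i j : Fin n, (∃ k : ℕ, (j : ℕ) < cum ℓ k ∧ cum ℓ k ≤ (i : ℕ)) → M i j = 0

theorem al_derivative_det {A m : Type*} [CommRing A] [Fintype m] [DecidableEq m]
    (N : Matrix m m (Polynomial A)) :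
    Polynomial.derivative N.det
      = ((N.map fun a => Polynomial.derivative a) * N.adjugate).trace := by
  have h : ∀ i, ((N.map fun a => Polynomial.derivative a) * N.adjugate) i i
      = (N.updateRow i (fun j => Polynomial.derivative (N i j))).det := by
    intro i
    rw [Matrix.mul_apply, ← Matrix.cramer_transpose_apply, Matrix.cramer_eq_adjugate_mulVec,
      ← Matrix.adjugate_transpose]
    simp [Matrix.mulVec, dotProduct, mul_comm]
  simp only [Matrix.trace, Matrix.diag, h]
  simp only [Matrix.det_apply', Polynomial.derivative_sum]
  rw [Finset.sum_comm]
  refine Finset.sum_congr rfl fun σ _ => ?_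
  rw [← Polynomial.C_eq_intCast, Polynomial.derivative_C_mul, Polynomial.derivative_prod_finset,
    Finset.mul_sum]
  refine Finset.sum_equiv σ (by simp) ?_
  intro i _
  congr 1
  rw [← Finset.prod_erase_mul _ _ (Finset.mem_univ i)]
  congr 1
  · refine Finset.prod_congr rfl ?_
    intro j hj
    rw [Matrix.updateRow_ne]
    intro h
    exact (Finset.ne_of_mem_erase hj) (σ.injective h)
  · simp

theorem al_pow_card {A m : Type*} [CommRing A] [Fintype m] [DecidableEq m]
    (hA : ∀ (k : ℕ) (a : A), a * ((k : A) + 1) = 0 → a = 0)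
    (Y : Matrix m m A) (h : ∀ k, (Y ^ (k + 1)).trace = 0) : Y ^ Fintype.card m = 0 := by
  nontriviality A
  let N : Matrix m m (Polynomial A) := 1 - (Polynomial.X : Polynomial A) • Y.map Polynomial.C
  let W : Matrix m m (Polynomial A) := (Polynomial.X : Polynomial A) • Y.map Polynomial.C
  have hW : ∀ k, W ^ k = (Polynomial.X : Polynomial A) ^ k • (Y ^ k).map Polynomial.C := by
    intro k
    have : (Y.map Polynomial.C) = (Polynomial.C : A →+* _).mapMatrix Y := rfl
    simp only [W]
    rw [smul_pow, this, ← map_pow]; rfl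
  have hN' : (N.map fun a => Polynomial.derivative a) = - Y.map Polynomial.C := by
    ext1 i j
    by_cases hij : i = j <;> simp [N, hij]
  have hq : Polynomial.derivative N.det = - ((Y.map Polynomial.C) * N.adjugate).trace := by
    rw [al_derivative_det, hN', Matrix.neg_mul, Matrix.trace_neg]
  have key : ∀ K : ℕ, (Polynomial.X : Polynomial A) ^ K ∣ Polynomial.derivative N.det := by
    intro K
    have h1 : N * ∑ k ∈ Finset.range K, W ^ k = 1 - W ^ K := mul_neg_geom_sum W K
    have h2 : N.adjugate * (1 - W ^ K) = N.det • ∑ k ∈ Finset.range K, W ^ k := by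
      rw [← h1, ← mul_assoc, Matrix.adjugate_mul, Matrix.smul_mul, one_mul]
    have h3 : N.adjugate = N.det • ∑ k ∈ Finset.range K, W ^ k + N.adjugate * W ^ K := by
      rw [← h2]; noncomm_ring
    have h4 : ((Y.map Polynomial.C) * (N.det • ∑ k ∈ Finset.range K, W ^ k)).trace = 0 := by
      rw [Matrix.mul_smul, Matrix.trace_smul, Finset.mul_sum, Matrix.trace_sum,
        Finset.sum_eq_zero, smul_zero]
      intro k _
      rw [hW, Matrix.mul_smul, Matrix.trace_smul, ← Matrix.map_mul, ← pow_succ']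
      have : ((Y ^ (k + 1)).map Polynomial.C).trace = Polynomial.C (Y ^ (k + 1)).trace := by
        simp [Matrix.trace]
      rw [this, h, map_zero, smul_zero]
    rw [hq, h3, Matrix.mul_add, Matrix.trace_add, h4, zero_add, hW, Matrix.mul_smul,
      Matrix.mul_smul, Matrix.trace_smul, smul_eq_mul]
    exact (dvd_mul_right _ _).neg_right
  have hz : Polynomial.derivative N.det = 0 := by
    ext k
    have := (Polynomial.X_pow_dvd_iff.1 (key (k + 1))) k (Nat.lt_succ_self k)
    simpa using this
  have hc : ∀ k, N.det.coeff (k + 1) = 0 := by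
    intro k
    have := congrArg (fun p => Polynomial.coeff p k) hz
    simp only [Polynomial.coeff_derivative, Polynomial.coeff_zero] at this
    exact hA _ _ this
  have hdet : Y.charpolyRev = N.det := rfl
  have hch : Y.charpoly = Polynomial.X ^ Fintype.card m := by
    ext k
    rw [Polynomial.coeff_X_pow]
    split_ifs with hk
    · rw [hk]
      have := Y.charpoly_monic.coeff_natDegree
      rwa [Matrix.charpoly_natDegree_eq_dim] at this
    · rcases lt_or_gt_of_ne hk with hk | hk
      · have h5 := hc (Fintype.card m - k - 1)
        rw [← hdet, ← Matrix.reverse_charpoly, Polynomial.coeff_reverse,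
          Matrix.charpoly_natDegree_eq_dim, Polynomial.revAt_le (by omega)] at h5
        convert h5 using 2; omega
      · apply Polynomial.coeff_eq_zero_of_natDegree_lt
        rwa [Matrix.charpoly_natDegree_eq_dim]
  have := Y.aeval_self_charpoly
  rw [hch] at this
  simpa using this

section Rosset
variable {K m : Type*} [Field K] [Fintype m] [DecidableEq m] {d : ℕ}

/-- The Rosset matrix with entries of degree one in the exterior algebra. -/
noncomputable def alX (x : Fin d → Matrix m m K) :
    Matrix m m (ExteriorAlgebra K (Fin d → K)) :=
  Matrix.of fun p q => ExteriorAlgebra.ι K (fun k => x k p q)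

theorem al_swap (u v : Fin d → K) : ExteriorAlgebra.ι K u * ExteriorAlgebra.ι K v
    = - (ExteriorAlgebra.ι K v * ExteriorAlgebra.ι K u) :=
  eq_neg_of_add_eq_zero_left (ExteriorAlgebra.ι_add_mul_swap u v)

theorem al_central (u v : Fin d → K) : ExteriorAlgebra.ι K u * ExteriorAlgebra.ι K v ∈
    Subalgebra.center K (ExteriorAlgebra K (Fin d → K)) := by
  rw [Subalgebra.mem_center_iff]
  intro b
  induction b using ExteriorAlgebra.induction with
  | algebraMap r => exact Algebra.commutes _ _
  | ι w =>
    rw [← mul_assoc, al_swap w u, neg_mul, mul_assoc, al_swap w v, mul_neg, neg_neg, mul_assoc]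
  | mul a b ha hb => rw [mul_assoc, hb, ← mul_assoc, ha, mul_assoc]
  | add a b ha hb => rw [add_mul, mul_add, ha, hb]

theorem al_pow_zero [CharZero K] (x : Fin d → Matrix m m K) (hd : 2 * Fintype.card m ≤ d) :
    alX x ^ d = 0 := by
  set E := ExteriorAlgebra K (Fin d → K)
  set X := alX x with hX
  let Y : Matrix m m (Subalgebra.center K E) := Matrix.of fun p q =>
    ⟨(X * X) p q, by
      rw [Matrix.mul_apply]
      exact Subalgebra.sum_mem _ fun r _ => al_central _ _⟩
  let f : Subalgebra.center K E →+* E := (Subalgebra.center K E).val.toRingHom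
  have hf : Function.Injective f := Subtype.val_injective
  have hY : f.mapMatrix Y = X * X := by ext p q; rfl
  have hYk : ∀ k, f.mapMatrix (Y ^ k) = (X * X) ^ k := by intro k; rw [map_pow, hY]
  have htor : ∀ (k : ℕ) (a : E), a * ((k : E) + 1) = 0 → a = 0 := by
    intro k a ha
    have h1 : ((k : E) + 1) = algebraMap K E ((k : K) + 1) := by simp
    rw [h1, ← Algebra.commutes, ← Algebra.smul_def] at ha
    exact (smul_eq_zero.1 ha).resolve_left (Nat.cast_add_one_ne_zero k)
  have h0 : Y ^ Fintype.card m = 0 := by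
    apply al_pow_card
    · intro k a ha
      apply hf
      rw [map_zero]
      apply htor k
      have := congrArg f ha
      simpa using this
    · intro k
      apply hf
      rw [map_zero]
      have h1 : f (Y ^ (k + 1)).trace = (X * X * (X * X) ^ k).trace := by
        rw [← pow_succ', ← hYk]; simp [Matrix.trace]
      rw [h1]
      have h2 : (X * X * (X * X) ^ k).trace = - (X * (X * X) ^ k * X).trace := by
        rw [← hYk]
        have hc : ∀ (r p : m) (a : E), a * f.mapMatrix (Y ^ k) r p
            = f.mapMatrix (Y ^ k) r p * a := by
          intro r p a
          exact (Subalgebra.mem_center_iff.1 ((Y ^ k) r p).2 a)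
        have hs : ∀ p s r : m, X p s * X s r * f.mapMatrix (Y ^ k) r p
            = - (X s r * f.mapMatrix (Y ^ k) r p * X p s) := by
          intro p s r
          have h5 : X p s * X s r = - (X s r * X p s) := al_swap _ _
          rw [h5, neg_mul, mul_assoc, hc, mul_assoc]
        simp only [Matrix.trace, Matrix.diag, Matrix.mul_apply, Finset.sum_mul, hs,
          Finset.sum_neg_distrib]
        congr 1
        rw [Finset.sum_congr rfl fun p _ => Finset.sum_comm, Finset.sum_comm]
      have h3 : Commute X ((X * X) ^ k) := ((Commute.refl X).mul_right (Commute.refl X)).pow_right k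
      rw [mul_assoc X _ X, ← h3.eq, ← mul_assoc] at h2
      apply htor 1
      rw [Nat.cast_one, mul_add, mul_one]
      nth_rewrite 1 [h2]
      exact neg_add_cancel _
  have h1 : X ^ (2 * Fintype.card m) = 0 := by
    rw [pow_mul, pow_two, ← hYk, h0, map_zero]
  exact pow_eq_zero_of_le hd h1

theorem al_list_prod (x : Fin d → Matrix m m K) (L : List (Fin d)) :
    (L.map fun k => ExteriorAlgebra.ι K (Pi.single k (1 : K) : Fin d → K) •
      (x k).map (algebraMap K (ExteriorAlgebra K (Fin d → K)))).prod =
    (L.map fun k => ExteriorAlgebra.ι K (Pi.single k (1 : K) : Fin d → K)).prod •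
      ((L.map x).prod).map (algebraMap K (ExteriorAlgebra K (Fin d → K))) := by
  induction L with
  | nil => simp
  | cons k L ih =>
    rw [List.map_cons, List.prod_cons, ih, List.map_cons, List.prod_cons, List.map_cons,
      List.prod_cons, Matrix.map_mul]
    ext p q
    simp only [Matrix.mul_apply, Matrix.smul_apply, Matrix.map_apply, smul_eq_mul, Finset.mul_sum]
    refine Finset.sum_congr rfl fun r _ => ?_
    simp only [mul_assoc]
    congr 1
    rw [← mul_assoc, Algebra.commutes, mul_assoc]

theorem al_expand (x : Fin d → Matrix m m K) :
    alX x ^ d = ∑ f : Fin d → Fin d,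
      (ExteriorAlgebra.ιMulti K d fun i => (Pi.single (f i) (1 : K) : Fin d → K)) •
      ((List.ofFn fun i => x (f i)).prod).map (algebraMap K (ExteriorAlgebra K (Fin d → K))) := by
  have h : alX x = ∑ k, ExteriorAlgebra.ι K (Pi.single k (1 : K) : Fin d → K) •
      (x k).map (algebraMap K (ExteriorAlgebra K (Fin d → K))) := by
    ext p q
    have : (fun k => x k p q) = ∑ k, (x k p q) • (Pi.single k (1 : K) : Fin d → K) := by
      ext j; simp [Finset.sum_apply, Pi.single_apply]
    simp only [alX, Matrix.of_apply]
    rw [this, map_sum, Matrix.sum_apply]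
    refine Finset.sum_congr rfl fun k _ => ?_
    rw [map_smul, Algebra.smul_def, Algebra.commutes]; rfl
  have h2 := MultilinearMap.mkPiAlgebraFin_apply_const (R := K) (n := d) (alX x)
  rw [← h2]
  conv_lhs => rw [h]
  rw [MultilinearMap.map_sum]
  refine Finset.sum_congr rfl fun f _ => ?_
  rw [MultilinearMap.mkPiAlgebraFin_apply, ExteriorAlgebra.ιMulti_apply]
  have := al_list_prod x (List.ofFn f)
  simpa only [List.map_ofFn, Function.comp_def] using this

theorem al_char_zero [CharZero K] (x : Fin d → Matrix m m K) (hd : 2 * Fintype.card m ≤ d) :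
    stdPoly d x = 0 := by
  have h := al_pow_zero x hd
  rw [al_expand] at h
  let D : ∀ i, (Fin d → K) [⋀^Fin i]→ₗ[K] K := fun i =>
    if hi : i = d then hi ▸ (Matrix.detRowAlternating : (Fin d → K) [⋀^Fin d]→ₗ[K] K) else 0
  have hD : D d = Matrix.detRowAlternating := by simp [D]
  let φ := ExteriorAlgebra.liftAlternating (R := K) (M := Fin d → K) (N := K) D
  ext p q
  have h2 := congrArg (fun M => φ (M p q)) h
  simp only [Matrix.sum_apply, Matrix.smul_apply, Matrix.map_apply, map_sum, Matrix.zero_apply,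
    map_zero] at h2
  rw [stdPoly, Matrix.sum_apply, Matrix.zero_apply, ← h2]
  have h3 : ∀ f : Fin d → Fin d, φ ((ExteriorAlgebra.ιMulti K d fun i =>
      (Pi.single (f i) (1 : K) : Fin d → K)) • algebraMap K (ExteriorAlgebra K (Fin d → K))
        ((List.ofFn fun i => x (f i)).prod p q))
      = Matrix.detRowAlternating (fun i => (Pi.single (f i) (1 : K) : Fin d → K)) *
        ((List.ofFn fun i => x (f i)).prod p q) := by
    intro f
    rw [smul_eq_mul, ← Algebra.commutes, ← Algebra.smul_def, map_smul,
      ExteriorAlgebra.liftAlternating_apply_ιMulti, hD, smul_eq_mul, mul_comm]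
  simp only [h3]
  symm
  rw [← Finset.sum_subset (Finset.subset_univ (Finset.univ.map
    ⟨fun σ : Equiv.Perm (Fin d) => (σ : Fin d → Fin d), DFunLike.coe_injective⟩))]
  · rw [Finset.sum_map]
    refine Finset.sum_congr rfl fun σ _ => ?_
    have h4 : Matrix.detRowAlternating (fun i => (Pi.single (σ i) (1 : K) : Fin d → K))
        = ((Equiv.Perm.sign σ : ℤˣ) : ℤ) := by
      have := Matrix.det_permute σ (1 : Matrix (Fin d) (Fin d) K)
      rw [Matrix.det_one, mul_one] at this
      rw [← this]
      change Matrix.det _ = _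
      congr 1
      ext i j
      simp [Matrix.one_apply, Pi.single_apply, eq_comm]
    simp only [Function.Embedding.coeFn_mk]
    rw [h4, Matrix.smul_apply, zsmul_eq_mul]
  · intro f _ hf
    rw [AlternatingMap.map_eq_zero_of_not_injective, zero_mul]
    intro hinj
    apply hf
    have hinj' : Function.Injective f := by
      intro a b hab
      apply hinj
      simp [hab]
    simp only [Finset.mem_map, Finset.mem_univ, true_and, Function.Embedding.coeFn_mk]
    exact ⟨Equiv.ofBijective f (Finite.injective_iff_bijective.1 hinj'), rfl⟩

end Rosset

theorem al_map {A B m : Type*} [CommRing A] [CommRing B] [Fintype m] [DecidableEq m] {d : ℕ}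
    (f : A →+* B) (x : Fin d → Matrix m m A) :
    f.mapMatrix (stdPoly d x) = stdPoly d fun k => f.mapMatrix (x k) := by
  simp only [stdPoly, map_sum, map_zsmul, map_list_prod, List.map_ofFn, Function.comp_def]

/-- Amitsur–Levitzki. -/
theorem al_main {F m : Type*} [Field F] [Fintype m] [DecidableEq m] {d : ℕ}
    (x : Fin d → Matrix m m F) (hd : 2 * Fintype.card m ≤ d) : stdPoly d x = 0 := by
  let R := MvPolynomial (Fin d × m × m) ℤ
  let K := FractionRing R
  let g : Fin d → Matrix m m R := fun k => Matrix.of fun p q => MvPolynomial.X (k, p, q)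
  have : CharZero K := charZero_of_injective_algebraMap (IsFractionRing.injective R K)
  have hg : stdPoly d g = 0 := by
    have h1 := al_map (algebraMap R K) g
    rw [al_char_zero _ hd] at h1
    have : Function.Injective ((algebraMap R K).mapMatrix (m := m)) :=
      Matrix.map_injective (IsFractionRing.injective R K)
    exact this (by rw [h1, map_zero])
  let e : R →+* F := MvPolynomial.eval₂Hom (Int.castRingHom F) (fun t => x t.1 t.2.1 t.2.2)
  have h2 := al_map e g
  rw [hg, map_zero] at h2
  rw [h2]
  congr 1
  ext k p q
  exact (MvPolynomial.eval₂Hom_X' (Int.castRingHom F)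
    (fun t : Fin d × m × m => x t.1 t.2.1 t.2.2) (k, p, q)).symm

section Mask
/-- The shape of the matrices: rows in `D` live in `D`, rows in `B` in `B ∪ D`,
rows in `C` in `C ∪ D`. -/
structure AlShape {F m : Type*} [Field F] (B C D : Set m) (x : Matrix m m F) : Prop where
  hB : ∀ p ∈ B, ∀ r, r ∉ B → r ∉ D → x p r = 0
  hC : ∀ p ∈ C, ∀ r, r ∉ C → r ∉ D → x p r = 0
  hD : ∀ p ∈ D, ∀ r, r ∉ D → x p r = 0

open scoped Classical in
/-- Set to zero all entries whose row or column is not in `S`. -/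
noncomputable def alMask {F m : Type*} [Field F] (S : Set m) (M : Matrix m m F) : Matrix m m F :=
  Matrix.of fun p q => if p ∈ S ∧ q ∈ S then M p q else 0

theorem alMask_pos {F m : Type*} [Field F] {S : Set m} (M : Matrix m m F) {p q : m}
    (hp : p ∈ S) (hq : q ∈ S) : alMask S M p q = M p q := by simp [alMask, hp, hq]

theorem alMask_neg {F m : Type*} [Field F] {S : Set m} (M : Matrix m m F) {p q : m}
    (h : ¬ (p ∈ S ∧ q ∈ S)) : alMask S M p q = 0 := by simp only [alMask, Matrix.of_apply, if_neg h]

theorem AlShape.symm {F m : Type*} [Field F] {B C D : Set m} {x : Matrix m m F}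
    (h : AlShape B C D x) : AlShape C B D x := ⟨h.hC, h.hB, h.hD⟩

variable {F m : Type*} [Field F] [Fintype m] [DecidableEq m]

theorem alMask_out_right (S : Set m) (L : List (Matrix m m F)) (p q : m) (hp : p ∈ S)
    (hq : q ∉ S) : (L.map (alMask S)).prod p q = 0 := by
  induction L generalizing p with
  | nil =>
    have : p ≠ q := by rintro rfl; exact hq hp
    simp [this]
  | cons x L ih =>
    rw [List.map_cons, List.prod_cons, Matrix.mul_apply]
    refine Finset.sum_eq_zero fun r _ => ?_
    by_cases hr : r ∈ S
    · rw [ih r hr, mul_zero]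
    · simp [alMask, hr]

theorem alMask_out_left (S : Set m) (x : Matrix m m F) (L : List (Matrix m m F)) (p q : m)
    (hp : p ∉ S) : ((x :: L).map (alMask S)).prod p q = 0 := by
  rw [List.map_cons, List.prod_cons, Matrix.mul_apply]
  refine Finset.sum_eq_zero fun r _ => ?_
  simp [alMask, hp]

open scoped Classical in
theorem alMask_in (S : Set m) (L : List (Matrix m m F)) (p q : S) :
    (L.map (alMask S)).prod p q
      = ((L.map fun x => x.submatrix (fun s : S => (s : m)) (fun s : S => (s : m))).prod
        : Matrix S S F) p q := by
  induction L generalizing p with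
  | nil => simp [Matrix.one_apply, Subtype.ext_iff]
  | cons x L ih =>
    rw [List.map_cons, List.prod_cons, Matrix.mul_apply, List.map_cons, List.prod_cons,
      Matrix.mul_apply]
    rw [← Finset.sum_subset (Finset.subset_univ (Finset.univ.map
      (Function.Embedding.subtype fun r => r ∈ S)))]
    · rw [Finset.sum_map]
      refine Finset.sum_congr rfl fun r _ => ?_
      have h1 := p.2
      have h2 := r.2
      simp only [Function.Embedding.subtype_apply]
      rw [ih r]
      simp [alMask, h1, h2]
    · intro r _ hr
      have : r ∉ S := by simpa using hr
      simp [alMask, this]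

open scoped Classical in
theorem alMask_std (S : Set m) {d : ℕ} (hd : 2 * Fintype.card S ≤ d) (hd0 : 0 < d)
    (x : Fin d → Matrix m m F) : stdPoly d (fun k => alMask S (x k)) = 0 := by
  ext p q
  have hl : ∀ σ : Equiv.Perm (Fin d), (List.ofFn fun i => alMask S (x (σ i)))
      = (List.ofFn fun i => x (σ i)).map (alMask S) := by
    intro σ; rw [List.map_ofFn]; rfl
  simp only [stdPoly, Matrix.sum_apply, Matrix.smul_apply, hl, Matrix.zero_apply]
  by_cases hp : p ∈ S
  · by_cases hq : q ∈ S
    · have h := al_main (fun k => (x k).submatrix (fun s : S => (s : m)) (fun s : S => (s : m))) hd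
      have h2 := congrFun (congrFun h ⟨p, hp⟩) ⟨q, hq⟩
      simp only [stdPoly, Matrix.sum_apply, Matrix.smul_apply, Matrix.zero_apply] at h2
      rw [← h2]
      refine Finset.sum_congr rfl fun σ _ => ?_
      congr 1
      have := alMask_in S (List.ofFn fun i => x (σ i)) ⟨p, hp⟩ ⟨q, hq⟩
      rw [this, List.map_ofFn]
      rfl
    · refine Finset.sum_eq_zero fun σ _ => ?_
      rw [alMask_out_right S _ p q hp hq, smul_zero]
  · refine Finset.sum_eq_zero fun σ _ => ?_
    obtain ⟨e, rfl⟩ : ∃ e, d = e + 1 := ⟨d - 1, by omega⟩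
    rw [List.ofFn_succ, alMask_out_left S _ _ p q hp, smul_zero]

theorem al_factB (B C D : Set m) (L : List (Matrix m m F)) (hL : ∀ x ∈ L, AlShape B C D x)
    (hBD : ∀ p ∈ B, p ∉ D) (hCD : ∀ p ∈ C, p ∉ D) (r q : m) (hr : r ∈ B ∨ r ∈ D) :
    (L.map (alMask Bᶜ)).prod r q = (L.map (alMask (Bᶜ ∩ Cᶜ))).prod r q := by
  induction L generalizing r with
  | nil => rfl
  | cons x L ih =>
    by_cases hB : r ∈ B
    · rw [alMask_out_left _ _ _ _ _ (by simpa using hB),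
        alMask_out_left _ _ _ _ _ (by simp [hB])]
    · have hrD := hr.resolve_left hB
      rw [List.map_cons, List.prod_cons, Matrix.mul_apply, List.map_cons, List.prod_cons,
        Matrix.mul_apply]
      refine Finset.sum_congr rfl fun s _ => ?_
      by_cases hs : s ∈ D
      · rw [ih (fun y hy => hL y (List.mem_cons_of_mem _ hy)) s (Or.inr hs)]
        have h1 : s ∉ C := fun h => hCD s h hs
        have h2 : r ∉ C := fun h => hCD r h hrD
        congr 1
        by_cases hsB : s ∈ B
        · rw [alMask_neg, alMask_neg] <;> simp [hsB]
        · rw [alMask_pos _ (by simpa using hB) (by simpa using hsB),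
            alMask_pos _ (by simp [hB, h2]) (by simp [hsB, h1])]
      · have := (hL x List.mem_cons_self).hD r hrD s hs
        simp [alMask, this]

theorem al_factC (B C D : Set m) (L : List (Matrix m m F)) (hL : ∀ x ∈ L, AlShape B C D x)
    (hBD : ∀ p ∈ B, p ∉ D) (hCD : ∀ p ∈ C, p ∉ D) (r q : m) (hr : r ∈ C ∨ r ∈ D) :
    (L.map (alMask Cᶜ)).prod r q = (L.map (alMask (Bᶜ ∩ Cᶜ))).prod r q := by
  rw [Set.inter_comm]
  exact al_factB C B D L (fun x hx => (hL x hx).symm) hCD hBD r q hr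

theorem al_incl_excl (B C D : Set m) (L : List (Matrix m m F)) (hL : ∀ x ∈ L, AlShape B C D x)
    (hBC : ∀ p ∈ B, p ∉ C)
    (hBD : ∀ p ∈ B, p ∉ D) (hCD : ∀ p ∈ C, p ∉ D) (p q : m) :
    L.prod p q = (L.map (alMask Cᶜ)).prod p q + (L.map (alMask Bᶜ)).prod p q
      - (L.map (alMask (Bᶜ ∩ Cᶜ))).prod p q := by
  induction L generalizing p with
  | nil => simp
  | cons x L ih =>
    have hL' : ∀ y ∈ L, AlShape B C D y := fun y hy => hL y (List.mem_cons_of_mem _ hy)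
    have hx := hL x List.mem_cons_self
    simp only [List.map_cons, List.prod_cons, Matrix.mul_apply]
    rw [← Finset.sum_add_distrib, ← Finset.sum_sub_distrib]
    refine Finset.sum_congr rfl fun r _ => ?_
    rw [ih hL' r]
    have fB := al_factB B C D L hL' hBD hCD r q
    have fC := al_factC B C D L hL' hBD hCD r q
    have h1 := hx.hB p
    have h2 := hx.hC p
    have h3 := hx.hD p
    have d1 := hBC p
    have d2 := hBD p
    have d3 := hCD p
    have e1 := hBC r
    have e2 := hBD r
    have e3 := hCD r
    by_cases x0 : x p r = 0
    · simp [alMask, x0]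
    have h1' : p ∈ B → r ∈ B ∨ r ∈ D := by
      intro hp; by_contra hcon; push Not at hcon; exact x0 (h1 hp r hcon.1 hcon.2)
    have h2' : p ∈ C → r ∈ C ∨ r ∈ D := by
      intro hp; by_contra hcon; push Not at hcon; exact x0 (h2 hp r hcon.1 hcon.2)
    have h3' : p ∈ D → r ∈ D := by
      intro hp; by_contra hcon; exact x0 (h3 hp r hcon)
    by_cases pB : p ∈ B
    · have pC := d1 pB
      have rC : r ∉ C := fun h => (h1' pB).elim (fun h' => e1 h' h) (e3 h)
      rw [alMask_pos x (S := Cᶜ) (by simpa using pC) (by simpa using rC),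
        alMask_neg x (S := Bᶜ) (by simp [pB]), alMask_neg x (S := Bᶜ ∩ Cᶜ) (by simp [pB]),
        fB (h1' pB)]
      ring
    · by_cases pC : p ∈ C
      · have rB : r ∉ B := fun h => (h2' pC).elim (fun h' => e1 h h') (e2 h)
        rw [alMask_pos x (S := Bᶜ) (by simpa using pB) (by simpa using rB),
          alMask_neg x (S := Cᶜ) (by simp [pC]), alMask_neg x (S := Bᶜ ∩ Cᶜ) (by simp [pC]),
          fC (h2' pC)]
        ring
      · by_cases rB : r ∈ B
        · have rC := e1 rB
          rw [alMask_pos x (S := Cᶜ) (by simpa using pC) (by simpa using rC),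
            alMask_neg x (S := Bᶜ) (by simp [rB]), alMask_neg x (S := Bᶜ ∩ Cᶜ) (by simp [rB]),
            fB (Or.inl rB)]
          ring
        · by_cases rC : r ∈ C
          · rw [alMask_pos x (S := Bᶜ) (by simpa using pB) (by simpa using rB),
              alMask_neg x (S := Cᶜ) (by simp [rC]), alMask_neg x (S := Bᶜ ∩ Cᶜ) (by simp [rC]),
              fC (Or.inl rC)]
            ring
          · rw [alMask_pos x (S := Bᶜ) (by simpa using pB) (by simpa using rB),
              alMask_pos x (S := Cᶜ) (by simpa using pC) (by simpa using rC),
              alMask_pos x (S := Bᶜ ∩ Cᶜ) (by simp [pB, pC]) (by simp [rB, rC])]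
            ring

theorem al_shape_std (B C D : Set m) {d : ℕ} (x : Fin d → Matrix m m F)
    (hL : ∀ k, AlShape B C D (x k)) (hBC : ∀ p ∈ B, p ∉ C)
    (hBD : ∀ p ∈ B, p ∉ D) (hCD : ∀ p ∈ C, p ∉ D) (hBn : B.Nonempty) (hCn : C.Nonempty)
    (hd : 2 * Fintype.card m - 2 ≤ d) (hd0 : 0 < d) : stdPoly d x = 0 := by
  classical
  have hcard : ∀ S : Set m, (∃ p, p ∉ S) → 2 * Fintype.card S ≤ d := by
    rintro S ⟨p, hp⟩
    have : Fintype.card S < Fintype.card m := Fintype.card_subtype_lt hp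
    omega
  obtain ⟨b, hb⟩ := hBn
  obtain ⟨c, hc⟩ := hCn
  have s1 := alMask_std Cᶜ (hcard _ ⟨c, by simpa using hc⟩) hd0 x
  have s2 := alMask_std Bᶜ (hcard _ ⟨b, by simpa using hb⟩) hd0 x
  have s3 := alMask_std (Bᶜ ∩ Cᶜ) (hcard _ ⟨b, by simp [hb]⟩) hd0 x
  have : stdPoly d x = stdPoly d (fun k => alMask Cᶜ (x k)) + stdPoly d (fun k => alMask Bᶜ (x k))
      - stdPoly d (fun k => alMask (Bᶜ ∩ Cᶜ) (x k)) := by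
    simp only [stdPoly]
    rw [← Finset.sum_add_distrib, ← Finset.sum_sub_distrib]
    refine Finset.sum_congr rfl fun σ _ => ?_
    rw [← smul_add, ← smul_sub]
    congr 1
    ext p q
    have := al_incl_excl B C D (List.ofFn fun i => x (σ i)) (by
      intro y hy
      rw [List.mem_ofFn] at hy
      obtain ⟨k, rfl⟩ := hy
      exact hL _) hBC hBD hCD p q
    simp only [List.map_ofFn, Function.comp_def] at this
    rw [Matrix.sub_apply, Matrix.add_apply]
    exact this
  rw [this, s1, s2, s3]; simp

end Mask

theorem cum_succ {t : ℕ} (ℓ : Fin t → ℕ) (k : ℕ) (hk : k < t) :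
    cum ℓ (k + 1) = cum ℓ k + ℓ ⟨k, hk⟩ := by
  have : ℓ ⟨k, hk⟩ = ∑ i : Fin t, if i = ⟨k, hk⟩ then ℓ i else 0 := by simp
  rw [this]
  simp only [cum]
  rw [← Finset.sum_add_distrib]
  refine Finset.sum_congr rfl fun i _ => ?_
  simp only [Fin.ext_iff]
  split_ifs <;> omega

theorem cum_le {t : ℕ} (ℓ : Fin t → ℕ) (k : ℕ) : cum ℓ k ≤ ∑ i, ℓ i := by
  refine Finset.sum_le_sum fun i _ => ?_
  split_ifs <;> omega

/-- If `Λ ⊆ E_{(ℓ₁,…,ℓ_t)}(F)` is not uniserial at `i`, i.e. the `(i,i+1)` off-diagonal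
block of every element of `Λ` vanishes (so `Λ_{i(i+1)}` sits block-diagonally inside
`M_{ℓ_i}(F) × M_{ℓ_{i+1}}(F)`), then `Λ` satisfies the standard identity `s_{2n-2}`. -/
theorem not_uniserial_satisfies (F : Type*) [Field F] (t : ℕ) (ht : 2 ≤ t)
    (ℓ : Fin t → ℕ) (hℓ : ∀ i, 0 < ℓ i) (n : ℕ) (hn : n = ∑ i, ℓ i)
    (Λ : Subalgebra F (Matrix (Fin n) (Fin n) F))
    (hUT : ∀ x ∈ Λ, BlockUT ℓ x)
    (i : ℕ) (hi : i + 1 < t)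
    (hblock : ∀ x ∈ Λ, ∀ p q : Fin n,
      cum ℓ i ≤ (p : ℕ) → (p : ℕ) < cum ℓ (i + 1) →
      cum ℓ (i + 1) ≤ (q : ℕ) → (q : ℕ) < cum ℓ (i + 2) → x p q = 0) :
    ∀ x : Fin (2 * n - 2) → Matrix (Fin n) (Fin n) F,
      (∀ k, x k ∈ Λ) → stdPoly (2 * n - 2) x = 0 := by
  intro x hx
  have c1 := cum_succ ℓ i (by omega)
  have c2 := cum_succ ℓ (i + 1) hi
  rw [show i + 1 + 1 = i + 2 from rfl] at c2
  have l1 := hℓ ⟨i, by omega⟩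
  have l2 := hℓ ⟨i + 1, hi⟩
  have c3 := cum_le ℓ (i + 2)
  rw [← hn] at c3
  refine al_shape_std {p : Fin n | cum ℓ i ≤ (p : ℕ) ∧ (p : ℕ) < cum ℓ (i + 1)}
    {p : Fin n | cum ℓ (i + 1) ≤ (p : ℕ) ∧ (p : ℕ) < cum ℓ (i + 2)} {p : Fin n | cum ℓ (i + 2) ≤ (p : ℕ)}
    x ?_ ?_ ?_ ?_ ⟨⟨cum ℓ i, by omega⟩, ?_⟩ ⟨⟨cum ℓ (i + 1), by omega⟩, ?_⟩ (by simp) (by omega)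
  · intro k
    have hU := hUT _ (hx k)
    refine ⟨?_, ?_, ?_⟩
    · intro p hp r hr1 hr2
      simp only [Set.mem_setOf_eq] at hp hr1 hr2
      by_cases h : (r : ℕ) < cum ℓ i
      · exact hU p r ⟨i, h, hp.1⟩
      · exact hblock _ (hx k) p r hp.1 hp.2 (by omega) (by omega)
    · intro p hp r hr1 hr2
      simp only [Set.mem_setOf_eq] at hp hr1 hr2
      exact hU p r ⟨i + 1, by omega, hp.1⟩
    · intro p hp r hr1
      simp only [Set.mem_setOf_eq] at hp hr1
      exact hU p r ⟨i + 2, by omega, hp⟩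
  all_goals
    simp only [Set.mem_setOf_eq]
    try intro p
    omega
end
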